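/- arXiv:2006.08518 — 8 statements merged into one kernel-verified Lean document; each statement's English description precedes it below -/
import Mathlib

section
/- Let f be convex and twice continuously differentiable on dom ψ with ν-Hölder continuous Hessian of constant H_ν. Then for all x, y ∈ dom ψ and every t ∈ [0,1], f(y) ≥ f(x) + ⟨∇f(x), y − x⟩ + (t/2)⟨∇²f(x)(y − x), y − x⟩ − t^{1+ν} H_ν ‖y − x‖^{2+ν} / ((1+ν)(2+ν)). -/
/-!
Along the segment `u ↦ x + u • h`, `h = y - x`, the second derivative of `f` is
`f'' (x + u • h) h h`, which the Hölder condition bounds below by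
`f'' x h h - Hν * ‖h‖ ^ (2 + ν) * u ^ ν`. Integrating twice (done by monotonicity of
the remainder and of its derivative) gives the Taylor bound `taylor_lower_bound` for
`f (x + t • h)`. Convexity gives `t * (f y - f x) ≥ f (x + t • h) - f x`, and dividing the
Taylor bound by `t > 0` yields the claim. The case `t = 0` follows by letting `t → 0⁺`, since
both sides are continuous in `t`.
-/

/-- A function with nonnegative derivative on `[0, 1]` is at least its value at `0`. -/
lemma le_of_hasDerivAt_nonneg {g g' : ℝ → ℝ}
    (hg : ∀ u ∈ Set.Icc (0 : ℝ) 1, HasDerivAt g (g' u) u)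
    (hg' : ∀ u ∈ Set.Icc (0 : ℝ) 1, 0 ≤ g' u) {t : ℝ} (ht : t ∈ Set.Icc (0 : ℝ) 1) :
    g 0 ≤ g t := by
  have hmono : MonotoneOn g (Set.Icc 0 1) :=
    monotoneOn_of_hasDerivWithinAt_nonneg (convex_Icc 0 1)
      (fun u hu => (hg u hu).continuousAt.continuousWithinAt)
      (fun u hu => (hg u (interior_subset hu)).hasDerivWithinAt)
      (fun u hu => hg' u (interior_subset hu))
  exact hmono (by simp) ht ht.1

/-- One-dimensional second-order Taylor bound: if `g'' u ≥ B - C * u ^ ν` on `[0, 1]`, then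
integrating twice bounds `g` from below. -/
lemma taylor_lower_bound {g g' g'' : ℝ → ℝ} {B C ν : ℝ} (hν : 0 ≤ ν)
    (hg : ∀ u ∈ Set.Icc (0 : ℝ) 1, HasDerivAt g (g' u) u)
    (hg' : ∀ u ∈ Set.Icc (0 : ℝ) 1, HasDerivAt g' (g'' u) u)
    (hB : ∀ u ∈ Set.Icc (0 : ℝ) 1, B - C * u ^ ν ≤ g'' u) {t : ℝ}
    (ht : t ∈ Set.Icc (0 : ℝ) 1) :
    g 0 + t * g' 0 + t ^ 2 / 2 * B - C * t ^ (2 + ν) / ((1 + ν) * (2 + ν)) ≤ g t := by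
  have h1 : (1 + ν) ≠ 0 := by positivity
  have h2 : (2 + ν) ≠ 0 := by positivity
  have hfirst : ∀ u ∈ Set.Icc (0 : ℝ) 1,
      0 ≤ g' u - g' 0 - u * B + C / (1 + ν) * u ^ (1 + ν) := by
    intro u hu
    have := le_of_hasDerivAt_nonneg
      (g := fun u => g' u - g' 0 - u * B + C / (1 + ν) * u ^ (1 + ν))
      (g' := fun u => g'' u - 1 * B + C / (1 + ν) * ((1 + ν) * u ^ (1 + ν - 1)))
      (fun u hu => (((hg' u hu).sub_const _).sub ((hasDerivAt_id u).mul_const B)).add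
        ((Real.hasDerivAt_rpow_const (Or.inr (by linarith))).const_mul _))
      (fun u hu => by
        have e : C / (1 + ν) * ((1 + ν) * u ^ (1 + ν - 1)) = C * u ^ ν := by
          rw [add_sub_cancel_left]; field_simp
        have := hB u hu
        rw [e]; linarith) hu
    simpa [Real.zero_rpow h1] using this
  have := le_of_hasDerivAt_nonneg
    (g := fun u => g u - u * g' 0 - u ^ 2 * (B / 2) + C / ((1 + ν) * (2 + ν)) * u ^ (2 + ν))
    (g' := fun u => g' u - 1 * g' 0 - ((2 : ℕ) * u ^ (2 - 1)) * (B / 2)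
      + C / ((1 + ν) * (2 + ν)) * ((2 + ν) * u ^ (2 + ν - 1)))
    (fun u hu => (((hg u hu).sub ((hasDerivAt_id u).mul_const _)).sub
      ((hasDerivAt_pow 2 u).mul_const _)).add
        ((Real.hasDerivAt_rpow_const (Or.inr (by linarith))).const_mul _))
    (fun u hu => by
      have e : C / ((1 + ν) * (2 + ν)) * ((2 + ν) * u ^ (2 + ν - 1))
          = C / (1 + ν) * u ^ (1 + ν) := by
        rw [show 2 + ν - 1 = 1 + ν by ring]; field_simp
      have := hfirst u hu
      rw [e]; norm_num; linarith) ht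
  simp only [Real.zero_rpow h2] at this
  have e : C / ((1 + ν) * (2 + ν)) * t ^ (2 + ν) = C * t ^ (2 + ν) / ((1 + ν) * (2 + ν)) := by
    ring
  rw [e] at this
  linarith

lemma bilin_sub_le {E : Type*} [NormedAddCommGroup E] [NormedSpace ℝ E]
    (A B : E →L[ℝ] E →L[ℝ] ℝ) (h : E) : A h h - B h h ≤ ‖A - B‖ * (‖h‖ * ‖h‖) := by
  have := (le_abs_self _).trans ((A - B).le_opNorm₂ h h)
  rw [← mul_assoc]
  exact this

lemma hasDerivAt_apply_line {E : Type*} [NormedAddCommGroup E] [NormedSpace ℝ E]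
    {F : E → E →L[ℝ] ℝ} {A : E →L[ℝ] E →L[ℝ] ℝ} {γ : ℝ → E} {h : E} {u : ℝ}
    (hF : HasFDerivAt F A (γ u)) (hγ : HasDerivAt γ h u) :
    HasDerivAt (fun v => F (γ v) h) (A h h) u := by
  have h1 : HasDerivAt (fun v => F (γ v)) (A h) u := hF.comp_hasDerivAt u hγ
  exact (ContinuousLinearMap.apply ℝ ℝ h).hasFDerivAt.comp_hasDerivAt u h1

/-- Lemma 1, second-order global lower bound.
`E` models `ℝⁿ` with an arbitrary norm; the "scalar product" `⟨s, h⟩` for a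
(dual) object `s` is modelled by applying the continuous linear functional `s`,
so the gradient `∇f(x)` is `f' x : E →L[ℝ] ℝ` and the Hessian `∇²f(x)` is the
bilinear form `f'' x : E →L[ℝ] E →L[ℝ] ℝ`; the dual and induced matrix norms
are the corresponding operator norms.
`s = dom ψ`, where `ψ` is a proper closed convex function, modelled by a convex
real-valued function on the convex set `s`. -/
theorem stmt_0 {E : Type*} [NormedAddCommGroup E] [NormedSpace ℝ E]
    (s : Set E) (hs : Convex ℝ s) (ψ : E → ℝ) (hψ : ConvexOn ℝ s ψ)
    (f : E → ℝ) (f' : E → E →L[ℝ] ℝ) (f'' : E → E →L[ℝ] E →L[ℝ] ℝ)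
    (hconv : ConvexOn ℝ s f)
    (hder1 : ∀ x ∈ s, HasFDerivAt f (f' x) x)
    (hder2 : ∀ x ∈ s, HasFDerivAt f' (f'' x) x)
    (hcont : ContinuousOn f'' s)
    (ν Hν : ℝ) (hν : ν ∈ Set.Icc (0 : ℝ) 1) (hH : 0 ≤ Hν)
    (hHolder : ∀ x ∈ s, ∀ y ∈ s, ‖f'' x - f'' y‖ ≤ Hν * ‖x - y‖ ^ ν) :
    ∀ x ∈ s, ∀ y ∈ s, ∀ t ∈ Set.Icc (0 : ℝ) 1,
      f y ≥ f x + f' x (y - x) + t / 2 * f'' x (y - x) (y - x)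
        - t ^ (1 + ν) * Hν * ‖y - x‖ ^ (2 + ν) / ((1 + ν) * (2 + ν)) := by
  intro x hx y hy
  obtain ⟨hν0, -⟩ := hν
  set h := y - x with hh
  have hmem : ∀ u ∈ Set.Icc (0 : ℝ) 1, x + u • h ∈ s := fun u hu =>
    hs.add_smul_sub_mem hx hy hu
  have hline : ∀ u : ℝ, HasDerivAt (fun u : ℝ => x + u • h) h u := fun u => by
    simpa using ((hasDerivAt_id u).smul_const h).const_add x
  have htaylor : ∀ t ∈ Set.Icc (0 : ℝ) 1,
      f x + t * f' x h + t ^ 2 / 2 * f'' x h h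
        - Hν * ‖h‖ ^ (2 + ν) * t ^ (2 + ν) / ((1 + ν) * (2 + ν)) ≤ f (x + t • h) := by
    intro t ht
    have := taylor_lower_bound (g := fun u => f (x + u • h)) (g' := fun u => f' (x + u • h) h)
      (g'' := fun u => f'' (x + u • h) h h) (B := f'' x h h) (C := Hν * ‖h‖ ^ (2 + ν)) hν0
      (fun u hu => (hder1 _ (hmem u hu)).comp_hasDerivAt u (hline u))
      (fun u hu => hasDerivAt_apply_line (hder2 _ (hmem u hu)) (hline u))
      (fun u hu => by
        have hop := bilin_sub_le (f'' x) (f'' (x + u • h)) h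
        have hnorm : ‖f'' x - f'' (x + u • h)‖ ≤ Hν * (u ^ ν * ‖h‖ ^ ν) := by
          have := hHolder x hx _ (hmem u hu)
          rwa [sub_add_cancel_left, norm_neg, norm_smul, Real.norm_of_nonneg hu.1,
            Real.mul_rpow hu.1 (norm_nonneg h)] at this
        have hpow : ‖h‖ ^ (2 + ν) = ‖h‖ * ‖h‖ * ‖h‖ ^ ν := by
          rw [Real.rpow_add_of_nonneg (norm_nonneg h) (by norm_num) hν0, Real.rpow_two, sq]
        have hmul : ‖f'' x - f'' (x + u • h)‖ * (‖h‖ * ‖h‖)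
            ≤ Hν * (u ^ ν * ‖h‖ ^ ν) * (‖h‖ * ‖h‖) := by gcongr
        have e : Hν * (‖h‖ * ‖h‖ * ‖h‖ ^ ν) * u ^ ν
            = Hν * (u ^ ν * ‖h‖ ^ ν) * (‖h‖ * ‖h‖) := by ring
        rw [hpow, e]
        exact sub_le_comm.1 (hop.trans hmul)) ht
    simpa using this
  have hpos : ∀ t ∈ Set.Ioc (0 : ℝ) 1,
      f x + f' x h + t / 2 * f'' x h h
        - t ^ (1 + ν) * Hν * ‖h‖ ^ (2 + ν) / ((1 + ν) * (2 + ν)) ≤ f y := by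
    intro t ht
    have hT := htaylor t ⟨ht.1.le, ht.2⟩
    have hC : f (x + t • h) ≤ (1 - t) * f x + t * f y := by
      have := hconv.2 hx hy (sub_nonneg.2 ht.2) ht.1.le (sub_add_cancel 1 t)
      rwa [show (1 - t) • x + t • y = x + t • h by rw [hh]; module] at this
    have hpow : t ^ (2 + ν) = t * t ^ (1 + ν) := by
      rw [show 2 + ν = 1 + (1 + ν) by ring, Real.rpow_add ht.1, Real.rpow_one]
    refine le_of_mul_le_mul_left ?_ ht.1
    have e : Hν * ‖h‖ ^ (2 + ν) * t ^ (2 + ν) / ((1 + ν) * (2 + ν))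
        = t * (t ^ (1 + ν) * Hν * ‖h‖ ^ (2 + ν) / ((1 + ν) * (2 + ν))) := by
      rw [hpow]; ring
    rw [e] at hT
    linarith
  intro t ht
  rcases ht.1.eq_or_lt with rfl | ht0
  · have hcts : Continuous fun t : ℝ => f x + f' x h + t / 2 * f'' x h h
        - t ^ (1 + ν) * Hν * ‖h‖ ^ (2 + ν) / ((1 + ν) * (2 + ν)) := by
      have := Real.continuous_rpow_const (q := 1 + ν) (by linarith)
      fun_prop
    refine le_of_tendsto (hcts.continuousWithinAt (s := Set.Ioi 0) (x := 0)) ?_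
    filter_upwards [Ioc_mem_nhdsGT (zero_lt_one' ℝ)] with t ht using hpos t ht
  · exact hpos t ⟨ht0, ht.2⟩
end

section
/- Let f be convex and twice continuously differentiable on dom ψ with ν-Hölder continuous Hessian of constant H_ν. Then for all x, y ∈ dom ψ and every t ∈ [0,1], ⟨∇f(y) − ∇f(x), y − x⟩ ≥ t⟨∇²f(x)(y − x), y − x⟩ − t^{1+ν} H_ν ‖y − x‖^{2+ν} / (1+ν). -/
/-!
Write `h = y - x` and `g τ = f' (x + τ h) h`, the derivative of `τ ↦ f (x + τ h)` on `[0, 1]`. By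
convexity `g` is nondecreasing, so `g 1 - g 0 ≥ g t - g 0`. Moreover `g' τ = f'' (x + τ h) h h`,
which by the Hölder condition is at least `f'' x h h - Hν τ ^ ν ‖h‖ ^ (2 + ν)`; hence
`τ ↦ g τ - τ f'' x h h + Hν ‖h‖ ^ (2 + ν) τ ^ (1 + ν) / (1 + ν)` is nondecreasing, and comparing its
values at `0` and `t` bounds `g t - g 0` from below as required.
-/


/-- gradient form of the second-order global lower bound.
`E` models `ℝⁿ` with an arbitrary norm; `⟨∇f(y) − ∇f(x), y − x⟩` is modelled by
applying the difference of the derivative functionals to `y − x`, the Hessian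
`∇²f(x)` is the bilinear form `f'' x`. `s = dom ψ` for the proper closed convex
function `ψ`, modelled by a convex real-valued function on the convex set `s`. -/
theorem stmt_1 {E : Type*} [NormedAddCommGroup E] [NormedSpace ℝ E]
    (s : Set E) (hs : Convex ℝ s) (ψ : E → ℝ) (hψ : ConvexOn ℝ s ψ)
    (f : E → ℝ) (f' : E → E →L[ℝ] ℝ) (f'' : E → E →L[ℝ] E →L[ℝ] ℝ)
    (hconv : ConvexOn ℝ s f)
    (hder1 : ∀ x ∈ s, HasFDerivAt f (f' x) x)
    (hder2 : ∀ x ∈ s, HasFDerivAt f' (f'' x) x)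
    (hcont : ContinuousOn f'' s)
    (ν Hν : ℝ) (hν : ν ∈ Set.Icc (0 : ℝ) 1) (hH : 0 ≤ Hν)
    (hHolder : ∀ x ∈ s, ∀ y ∈ s, ‖f'' x - f'' y‖ ≤ Hν * ‖x - y‖ ^ ν) :
    ∀ x ∈ s, ∀ y ∈ s, ∀ t ∈ Set.Icc (0 : ℝ) 1,
      f' y (y - x) - f' x (y - x)
        ≥ t * f'' x (y - x) (y - x) - t ^ (1 + ν) * Hν * ‖y - x‖ ^ (2 + ν) / (1 + ν) := by
  intro x hx y hy t ht
  obtain ⟨hν0, -⟩ := hν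
  obtain ⟨ht0, ht1⟩ := ht
  set h := y - x with hh
  have hmem : ∀ τ ∈ Set.Icc (0 : ℝ) 1, x + τ • h ∈ s := fun τ hτ =>
    hs.add_smul_sub_mem hx hy hτ
  have hline : ∀ τ : ℝ, HasDerivAt (fun τ : ℝ => x + τ • h) h τ := fun τ => by
    simpa using ((hasDerivAt_id τ).smul_const h).const_add x
  have hp : ∀ τ ∈ Set.Icc (0 : ℝ) 1,
      HasDerivAt (fun τ : ℝ => f (x + τ • h)) (f' (x + τ • h) h) τ := fun τ hτ =>
    (hder1 _ (hmem τ hτ)).comp_hasDerivAt τ (hline τ)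
  have hg : ∀ τ ∈ Set.Icc (0 : ℝ) 1,
      HasDerivAt (fun τ : ℝ => f' (x + τ • h) h) (f'' (x + τ • h) h h) τ := fun τ hτ => by
    have hd : HasDerivAt (fun τ : ℝ => f' (x + τ • h)) (f'' (x + τ • h) h) τ :=
      (hder2 _ (hmem τ hτ)).comp_hasDerivAt τ (hline τ)
    exact (ContinuousLinearMap.apply ℝ ℝ h).hasFDerivAt.comp_hasDerivAt τ hd
  have hpconv : ConvexOn ℝ (Set.Icc (0 : ℝ) 1) (fun τ : ℝ => f (x + τ • h)) := by
    refine ⟨convex_Icc 0 1, fun a ha b hb u v hu hv huv => ?_⟩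
    have e : x + (u • a + v • b) • h = u • (x + a • h) + v • (x + b • h) := by
      obtain rfl : v = 1 - u := by linarith
      rw [smul_eq_mul, smul_eq_mul]
      module
    simp only [e]
    exact hconv.2 (hmem a ha) (hmem b hb) hu hv huv
  have h1mem : (1 : ℝ) ∈ Set.Icc (0 : ℝ) 1 := ⟨zero_le_one, le_rfl⟩
  have hy1 : x + (1 : ℝ) • h = y := by simp [hh]
  have hmono : f' (x + t • h) h ≤ f' y h := by
    rcases ht1.eq_or_lt with rfl | hlt
    · rw [hy1]
    · have h1 := hpconv.le_slope_of_hasDerivAt ⟨ht0, ht1⟩ h1mem hlt (hp t ⟨ht0, ht1⟩)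
      have h2 := hpconv.slope_le_of_hasDerivAt ⟨ht0, ht1⟩ h1mem hlt (hp 1 h1mem)
      rw [hy1] at h2
      exact h1.trans h2
  set C : ℝ := Hν * ‖h‖ ^ (2 + ν) with hC
  have hΦ : ∀ τ ∈ Set.Icc (0 : ℝ) 1, HasDerivAt
      (fun τ : ℝ => f' (x + τ • h) h - τ * f'' x h h + C * τ ^ (1 + ν) / (1 + ν))
      (f'' (x + τ • h) h h - f'' x h h + C * τ ^ ν) τ := fun τ hτ => by
    have hr := ((Real.hasDerivAt_rpow_const (x := τ) (p := 1 + ν)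
      (Or.inr (by linarith))).const_mul C).div_const (1 + ν)
    have h3 := ((hg τ hτ).sub ((hasDerivAt_id τ).mul_const (f'' x h h))).add hr
    refine h3.congr_deriv ?_
    have : 1 + ν ≠ 0 := by positivity
    rw [add_sub_cancel_left]
    field_simp
  have hnonneg : ∀ τ ∈ Set.Icc (0 : ℝ) 1,
      0 ≤ f'' (x + τ • h) h h - f'' x h h + C * τ ^ ν := fun τ hτ => by
    have h4 : ‖(f'' (x + τ • h) - f'' x) h h‖ ≤ ‖f'' (x + τ • h) - f'' x‖ * ‖h‖ * ‖h‖ :=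
      ContinuousLinearMap.le_opNorm₂ _ h h
    have h5 := hHolder _ (hmem τ hτ) x hx
    rw [add_sub_cancel_left, norm_smul, Real.norm_of_nonneg hτ.1,
      Real.mul_rpow hτ.1 (norm_nonneg h)] at h5
    have h6 : ‖h‖ ^ (2 + ν) = ‖h‖ ^ ν * ‖h‖ * ‖h‖ := by
      rw [Real.rpow_add_of_nonneg (norm_nonneg h) zero_le_two hν0, Real.rpow_two]
      ring
    have h7 : ‖f'' (x + τ • h) - f'' x‖ * ‖h‖ * ‖h‖ ≤ C * τ ^ ν := by
      calc _ ≤ Hν * (τ ^ ν * ‖h‖ ^ ν) * ‖h‖ * ‖h‖ := by gcongr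
        _ = C * τ ^ ν := by rw [hC, h6]; ring
    have h8 := neg_le_of_abs_le ((Real.norm_eq_abs _).symm.trans_le (h4.trans h7))
    simp only [sub_apply] at h8
    linarith
  have hΦmono := monotoneOn_of_deriv_nonneg (convex_Icc (0 : ℝ) 1)
    (fun τ hτ => (hΦ τ hτ).continuousAt.continuousWithinAt)
    (fun τ hτ => (hΦ τ (interior_subset hτ)).differentiableAt.differentiableWithinAt)
    (fun τ hτ => by
      rw [(hΦ τ (interior_subset hτ)).deriv]
      exact hnonneg τ (interior_subset hτ))
  have h9 := hΦmono ⟨le_rfl, zero_le_one⟩ ⟨ht0, ht1⟩ ht0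
  have h10 : (0 : ℝ) ^ (1 + ν) = 0 := Real.zero_rpow (by positivity)
  simp only [h10, zero_smul, add_zero, zero_mul, mul_zero, zero_div, sub_zero] at h9
  have h11 : t ^ (1 + ν) * Hν * ‖h‖ ^ (2 + ν) / (1 + ν) = C * t ^ (1 + ν) / (1 + ν) := by
    rw [hC]; ring
  rw [h11]
  linarith
end

section
/- Let f be convex and twice continuously differentiable on dom ψ with ν-Hölder continuous Hessian of constant H_ν > 0, where ν ∈ (0,1]. Then for all x, y ∈ dom ψ with x ≠ y, f(y) ≥ f(x) + ⟨∇f(x), y − x⟩ + (γ̄/2)⟨∇²f(x)(y − x), y − x⟩, where γ̄ := (ν/(1+ν)) · min{1, (2+ν)⟨∇²f(x)(y − x), y − x⟩ / (2 H_ν ‖y − x‖^{2+ν})}^{1/ν}. -/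
/-!
Restrict `f` to the segment from `x` to `y`: put `g t = f (x + t (y - x))`. Then `g` is convex on
`[0, 1]` and, with `a = g'' 0` and `c = Hν ‖y - x‖ ^ (2 + ν)`, the Hölder condition gives
`g'' t ≥ a - c t ^ ν`. Integrating once and twice bounds `g' τ` and `g τ` from below, for any
`τ ∈ [0, 1]` (`taylor_bounds`), and the tangent inequality `g 1 ≥ g τ + (1 - τ) g' τ` turns this into
`g 1 ≥ g 0 + g' 0 + a (τ - τ² / 2) - c (τ ^ (1 + ν) / (1 + ν) - τ ^ (2 + ν) / (2 + ν))`.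
In effect, `g''` is bounded below by `a - c t ^ ν` up to time `τ` and by `0` afterwards.
Choosing `τ = min 1 ((2 + ν) a / (2 c)) ^ (1 / ν)`, so that `c τ ^ ν ≤ (2 + ν) a / 2`, gives the
claim (`lower_bound_unit_interval`).
-/

/-- The bounds obtained by integrating `g'' t ≥ g'' 0 - c t ^ ν` once and twice from `0` to `τ`. -/
lemma taylor_bounds {g g1 g2 : ℝ → ℝ} {ν c : ℝ} (hν : 0 < ν)
    (h1 : ∀ t ∈ Set.Icc (0 : ℝ) 1, HasDerivAt g (g1 t) t)
    (h2 : ∀ t ∈ Set.Icc (0 : ℝ) 1, HasDerivAt g1 (g2 t) t)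
    (hg2 : ∀ t ∈ Set.Icc (0 : ℝ) 1, g2 0 - c * t ^ ν ≤ g2 t)
    {τ : ℝ} (hτ : τ ∈ Set.Icc (0 : ℝ) 1) :
    g1 0 + g2 0 * τ - c * τ ^ (1 + ν) / (1 + ν) ≤ g1 τ ∧
    g 0 + g1 0 * τ + g2 0 * τ ^ 2 / 2 - c * τ ^ (2 + ν) / ((1 + ν) * (2 + ν)) ≤ g τ := by
  have p1 : (1 + ν) ≠ 0 := by positivity
  have p2 : (2 + ν) ≠ 0 := by positivity
  have h0 : (0 : ℝ) ∈ Set.Icc (0 : ℝ) 1 := by simp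
  have nonneg_of_deriv : ∀ φ φ' : ℝ → ℝ, (∀ t ∈ Set.Icc (0 : ℝ) 1, HasDerivAt φ (φ' t) t) →
      (∀ t ∈ Set.Icc (0 : ℝ) 1, 0 ≤ φ' t) → ∀ t ∈ Set.Icc (0 : ℝ) 1, φ 0 ≤ φ t := by
    intro φ φ' hd hn t ht
    refine monotoneOn_of_deriv_nonneg (convex_Icc 0 1)
      (fun t ht => (hd t ht).continuousAt.continuousWithinAt)
      (fun t ht => (hd t (interior_subset ht)).differentiableAt.differentiableWithinAt)
      (fun t ht => ?_) h0 ht ht.1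
    rw [(hd t (interior_subset ht)).deriv]
    exact hn t (interior_subset ht)
  have first : ∀ t ∈ Set.Icc (0 : ℝ) 1,
      g1 0 + g2 0 * t - c * t ^ (1 + ν) / (1 + ν) ≤ g1 t := by
    intro t ht
    have := nonneg_of_deriv (fun t => g1 t - g2 0 * t + c / (1 + ν) * t ^ (1 + ν))
      (fun t => g2 t - g2 0 * 1 + c / (1 + ν) * ((1 + ν) * t ^ (1 + ν - 1)))
      (fun t ht => ((h2 t ht).sub ((hasDerivAt_id t).const_mul _)).add
        ((Real.hasDerivAt_rpow_const (Or.inr (by linarith))).const_mul _))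
      (fun t ht => by
        have := hg2 t ht
        have e : c / (1 + ν) * ((1 + ν) * t ^ (1 + ν - 1)) = c * t ^ ν := by
          rw [add_sub_cancel_left]; field_simp
        rw [e]; linarith) t ht
    simp only [Real.zero_rpow p1] at this
    rw [mul_div_right_comm]
    linarith
  refine ⟨first τ hτ, ?_⟩
  have := nonneg_of_deriv
    (fun t => g t - g1 0 * t - g2 0 / 2 * t ^ 2 + c / ((1 + ν) * (2 + ν)) * t ^ (2 + ν))
    (fun t => g1 t - g1 0 * 1 - g2 0 / 2 * ((2 : ℕ) * t ^ (2 - 1))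
      + c / ((1 + ν) * (2 + ν)) * ((2 + ν) * t ^ (2 + ν - 1)))
    (fun t ht => (((h1 t ht).sub ((hasDerivAt_id t).const_mul _)).sub
        ((hasDerivAt_pow 2 t).const_mul _)).add
        ((Real.hasDerivAt_rpow_const (Or.inr (by linarith))).const_mul _))
    (fun t ht => by
      have := first t ht
      have e : c / ((1 + ν) * (2 + ν)) * ((2 + ν) * t ^ (2 + ν - 1))
          = c * t ^ (1 + ν) / (1 + ν) := by
        rw [show 2 + ν - 1 = 1 + ν by ring]; field_simp
      rw [e]; norm_num; linarith) τ hτ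
  simp only [Real.zero_rpow p2] at this
  rw [mul_div_right_comm c]
  linarith

/-- The one-dimensional case: a lower bound for a convex function on `[0, 1]`. -/
lemma lower_bound_unit_interval {g g1 g2 : ℝ → ℝ} {ν c : ℝ} (hν : 0 < ν) (hc : 0 < c)
    (hg : ConvexOn ℝ (Set.Icc 0 1) g)
    (h1 : ∀ t ∈ Set.Icc (0 : ℝ) 1, HasDerivAt g (g1 t) t)
    (h2 : ∀ t ∈ Set.Icc (0 : ℝ) 1, HasDerivAt g1 (g2 t) t)
    (hg2 : ∀ t ∈ Set.Icc (0 : ℝ) 1, g2 0 - c * t ^ ν ≤ g2 t) :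
    g 0 + g1 0 + (ν / (1 + ν) * min 1 ((2 + ν) * g2 0 / (2 * c)) ^ (1 / ν)) / 2 * g2 0 ≤ g 1 := by
  have h0 : (0 : ℝ) ∈ Set.Icc (0 : ℝ) 1 := by simp
  have h0' : (1 : ℝ) ∈ Set.Icc (0 : ℝ) 1 := by simp
  have ha : 0 ≤ g2 0 := by
    have hmono : MonotoneOn g1 (Set.Icc 0 1) := by
      intro u hu v hv huv
      rcases huv.eq_or_lt with rfl | huv
      · exact le_rfl
      · exact (hg.le_slope_of_hasDerivAt hu hv huv (h1 u hu)).trans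
          (hg.slope_le_of_hasDerivAt hu hv huv (h1 v hv))
    have hd := (h2 0 h0).hasDerivWithinAt (s := Set.Icc 0 1)
    rw [← hd.derivWithin (uniqueDiffOn_Icc zero_lt_one 0 h0)]
    exact hmono.derivWithin_nonneg
  set a := g2 0 with hadef
  set q := min 1 ((2 + ν) * a / (2 * c)) with hq
  have hq0 : 0 ≤ q := le_min zero_le_one (by positivity)
  have hq1 : q ≤ 1 := min_le_left _ _
  set τ := q ^ (1 / ν) with hτdef
  have hτ0 : 0 ≤ τ := Real.rpow_nonneg hq0 _
  have hτ1 : τ ≤ 1 := Real.rpow_le_one hq0 hq1 (by positivity)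
  have hτν : τ ^ ν = q := by
    rw [hτdef, ← Real.rpow_mul hq0, one_div_mul_cancel hν.ne', Real.rpow_one]
  have hcq : c * q ≤ (2 + ν) * a / 2 := by
    calc c * q ≤ c * ((2 + ν) * a / (2 * c)) := by gcongr; exact min_le_right _ _
      _ = _ := by field_simp
  obtain ⟨b1, b2⟩ := taylor_bounds hν h1 h2 hg2 ⟨hτ0, hτ1⟩
  have tangent : g τ + (1 - τ) * g1 τ ≤ g 1 := by
    rcases hτ1.eq_or_lt with h | h
    · rw [h]; simp
    · have := hg.le_slope_of_hasDerivAt ⟨hτ0, hτ1⟩ h0' h (h1 τ ⟨hτ0, hτ1⟩)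
      rw [slope_def_field, le_div_iff₀ (by linarith)] at this
      linarith
  have e1 : τ ^ (1 + ν) = τ * q := by
    rw [Real.rpow_add' hτ0 (by positivity), Real.rpow_one, hτν]
  have e2 : τ ^ (2 + ν) = τ ^ 2 * q := by
    rw [Real.rpow_add' hτ0 (by positivity), hτν]; norm_num
  rw [e1] at b1
  rw [e2] at b2
  rw [← hadef] at b1 b2
  have b3 := mul_le_mul_of_nonneg_left b1 (sub_nonneg.2 hτ1)
  -- The coefficient of `c * q` in the collected bound is nonnegative, so `hcq` may be inserted.
  have hcoef : 0 ≤ τ * ((2 + ν - (1 + ν) * τ) / ((1 + ν) * (2 + ν))) := by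
    apply mul_nonneg hτ0
    apply div_nonneg _ (by positivity)
    nlinarith
  have b4 := mul_le_mul_of_nonneg_left hcq hcoef
  have id1 : τ * ((2 + ν - (1 + ν) * τ) / ((1 + ν) * (2 + ν))) * (c * q)
      = c * (τ ^ 2 * q) / ((1 + ν) * (2 + ν)) + (1 - τ) * (c * (τ * q) / (1 + ν)) := by
    field_simp; ring
  have id2 : a * (τ - τ ^ 2 / 2)
        - τ * ((2 + ν - (1 + ν) * τ) / ((1 + ν) * (2 + ν))) * ((2 + ν) * a / 2)
      = ν / (1 + ν) * τ / 2 * a := by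
    field_simp; ring
  linarith


/-- enhanced second-order lower bound with the optimal contraction
coefficient `γ̄`. `E` models `ℝⁿ` with an arbitrary norm; the gradient and Hessian
of `f` are modelled by the (continuous) linear functional `f' x` and the bilinear
form `f'' x`. `s = dom ψ` for the proper closed convex function `ψ`, modelled by a
convex real-valued function on the convex set `s`. -/
theorem stmt_4 {E : Type*} [NormedAddCommGroup E] [NormedSpace ℝ E]
    (s : Set E) (hs : Convex ℝ s) (ψ : E → ℝ) (hψ : ConvexOn ℝ s ψ)
    (f : E → ℝ) (f' : E → E →L[ℝ] ℝ) (f'' : E → E →L[ℝ] E →L[ℝ] ℝ)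
    (hconv : ConvexOn ℝ s f)
    (hder1 : ∀ x ∈ s, HasFDerivAt f (f' x) x)
    (hder2 : ∀ x ∈ s, HasFDerivAt f' (f'' x) x)
    (hcont : ContinuousOn f'' s)
    (ν Hν : ℝ) (hν : ν ∈ Set.Ioc (0 : ℝ) 1) (hH : 0 < Hν)
    (hHolder : ∀ x ∈ s, ∀ y ∈ s, ‖f'' x - f'' y‖ ≤ Hν * ‖x - y‖ ^ ν) :
    ∀ x ∈ s, ∀ y ∈ s, x ≠ y →
      f y ≥ f x + f' x (y - x)
        + (ν / (1 + ν)
            * min 1 ((2 + ν) * f'' x (y - x) (y - x) / (2 * Hν * ‖y - x‖ ^ (2 + ν)))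
              ^ (1 / ν)) / 2
          * f'' x (y - x) (y - x) := by
  intro x hx y hy hxy
  obtain ⟨hν0, hν1⟩ := hν
  set d := y - x with hd
  have hd0 : 0 < ‖d‖ := norm_pos_iff.2 (sub_ne_zero.2 hxy.symm)
  have hmem : ∀ t ∈ Set.Icc (0 : ℝ) 1, x + t • d ∈ s := fun t ht =>
    hs.add_smul_sub_mem hx hy ht
  have hline : ∀ t : ℝ, HasDerivAt (fun t : ℝ => x + t • d) d t := fun t => by
    simpa using ((hasDerivAt_id t).smul_const d).const_add x
  have hg : ConvexOn ℝ (Set.Icc 0 1) (fun t : ℝ => f (x + t • d)) := by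
    have := hconv.comp_affineMap (AffineMap.lineMap x y)
    refine (this.subset (fun t ht => ?_) (convex_Icc 0 1)).congr (fun t _ => ?_)
    · simpa [AffineMap.lineMap_apply, add_comm] using hmem t ht
    · simp [AffineMap.lineMap_apply, add_comm, hd]
  have key := lower_bound_unit_interval (g := fun t => f (x + t • d))
    (g1 := fun t => f' (x + t • d) d) (g2 := fun t => f'' (x + t • d) d d)
    (ν := ν) (c := Hν * ‖d‖ ^ (2 + ν)) hν0 (by positivity) hg
    (fun t ht => (hder1 _ (hmem t ht)).comp_hasDerivAt t (hline t))
    (fun t ht => (ContinuousLinearMap.apply ℝ ℝ d).hasFDerivAt.comp_hasDerivAt t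
      ((hder2 _ (hmem t ht)).comp_hasDerivAt t (hline t)))
    (fun t ht => ?_)
  · have hxd : x + d = y := by simp [hd]
    simpa only [zero_smul, add_zero, one_smul, hxd, ← mul_assoc] using key
  · have hb := (f'' x - f'' (x + t • d)).le_opNorm₂ d d
    have hH2 := hHolder x hx _ (hmem t ht)
    have hn : ‖x - (x + t • d)‖ = t * ‖d‖ := by
      rw [sub_add_cancel_left, norm_neg, norm_smul, Real.norm_of_nonneg ht.1]
    rw [hn, Real.mul_rpow ht.1 hd0.le] at hH2
    have hp : ‖d‖ ^ (2 + ν) = ‖d‖ ^ ν * ‖d‖ * ‖d‖ := by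
      rw [add_comm, Real.rpow_add hd0]; norm_num; ring
    have := (le_abs_self _).trans (hb.trans (mul_le_mul_of_nonneg_right
      (mul_le_mul_of_nonneg_right hH2 hd0.le) hd0.le))
    simp only [sub_apply] at this
    simp only [zero_smul, add_zero]
    rw [hp]
    linarith
end

section
/- Consider the Contracting-Domain Newton iterates: given x₀ ∈ dom ψ, positive coefficients {a_k}_{k≥1}, A_k := Σ_{i=1}^k a_i, γ_k := a_{k+1}/A_{k+1}, points v_{k+1} ∈ dom ψ satisfying the stationarity condition ⟨∇f(x_k) + ∇²f(x_k)(x_{k+1} − x_k), x − v_{k+1}⟩ + ψ(x) ≥ ψ(v_{k+1}) + (μ/2)‖x − v_{k+1}‖² for all x ∈ dom ψ, and x_{k+1} := x_k + γ_k(v_{k+1} − x_k). Then for every k ≥ 0 and every x ∈ dom ψ, A_k F(x_k) ≤ φ_k(x) + B_k(x), where φ_k(x) := Σ_{i=1}^k a_i [f(x_i) + ⟨∇f(x_i), x − x_i⟩ + ψ(x)] and B_k(x) := Σ_{i=1}^k [ H_ν a_i^{2+ν} ‖x − v_i‖·‖x_{i−1} − v_i‖^{1+ν} / ((1+ν) A_i^{1+ν})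 − (μ a_i/2)‖x − v_i‖² − (μ a_i A_{i−1} / (2 A_i))‖x_{i−1} − v_i‖² ]. -/
/-!
The proof is by induction on `k`, with `a := a_{k+1}`, `A₊ := A_{k+1}`, `x₊ := x_{k+1}` and
`v := v_{k+1}`. By the induction hypothesis, `φ_{k+1}(y) + B_{k+1}(y)` is at least
`A_k F(x_k) + a (f(x₊) + ⟨∇f(x₊), y - x₊⟩ + ψ(y))` plus the last summand of `B_{k+1}(y)`.
Bound `f(x_k)` from below by its linearization at `x₊` (`grad_ineq`). Since
`A₊ x₊ = A_k x_k + a v`, the linear terms add up to `a ⟨∇f(x₊), y - v⟩`. The stationarity condition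
compares `ψ(y)` with `ψ(v)`, and strong convexity of `ψ` at `x₊`, a convex combination of `x_k`
and `v`, compares `A_k ψ(x_k) + a ψ(v)` with `A₊ ψ(x₊)`. What is left is
`a ⟨∇f(x₊) - ∇f(x_k) - ∇²f(x_k)(x₊ - x_k), y - v⟩`, which the Hölder condition on the Hessian
controls (`taylor_bound`), using `x₊ - x_k = (a / A₊) (v - x_k)`.
-/

theorem grad_ineq {E : Type*} [NormedAddCommGroup E] [NormedSpace ℝ E]
    {s : Set E} {f : E → ℝ} {L : E →L[ℝ] ℝ} (hconv : ConvexOn ℝ s f) {x y : E}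
    (hx : x ∈ s) (hy : y ∈ s) (hd : HasFDerivAt f L x) : f x + L (y - x) ≤ f y := by
  have h1 : ConvexOn ℝ ((AffineMap.lineMap x y : ℝ →ᵃ[ℝ] E) ⁻¹' s)
      (f ∘ (AffineMap.lineMap x y : ℝ →ᵃ[ℝ] E)) := hconv.comp_affineMap _
  have h2 : HasDerivAt (f ∘ (AffineMap.lineMap x y : ℝ →ᵃ[ℝ] E)) (L (y - x)) 0 := by
    have h3 : HasDerivAt (AffineMap.lineMap x y : ℝ →ᵃ[ℝ] E) (y - x) (0 : ℝ) :=
      AffineMap.hasDerivAt_lineMap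
    refine HasFDerivAt.comp_hasDerivAt (0 : ℝ) ?_ h3
    simpa using hd
  have h4 := h1.le_slope_of_hasDerivAt (x := 0) (y := 1) (by simpa using hx) (by simpa using hy)
    one_pos h2
  simp [slope_def_field] at h4
  simp only [map_sub]
  linarith

/-- First-order Taylor estimate for a map with `ν`-Hölder derivative. It is obtained by comparing
the growth of the remainder along the segment, at `x + t (y - x)`, with that of
`t ↦ H ‖y - x‖^(1 + ν) t^(1 + ν) / (1 + ν)`. -/
theorem taylor_bound {E G : Type*} [NormedAddCommGroup E] [NormedSpace ℝ E]
    [NormedAddCommGroup G] [NormedSpace ℝ G]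
    {s : Set E} (hs : Convex ℝ s) {g : E → G} {g' : E → E →L[ℝ] G}
    (hder : ∀ x ∈ s, HasFDerivAt g (g' x) x) {ν H : ℝ} (hν : 0 ≤ ν)
    (hHolder : ∀ x ∈ s, ∀ y ∈ s, ‖g' x - g' y‖ ≤ H * ‖x - y‖ ^ ν)
    {x y : E} (hx : x ∈ s) (hy : y ∈ s) :
    ‖g y - g x - g' x (y - x)‖ ≤ H * ‖y - x‖ ^ (1 + ν) / (1 + ν) := by
  have hmem : ∀ t ∈ Set.Icc (0 : ℝ) 1, x + t • (y - x) ∈ s := fun t ht =>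
    hs.add_smul_sub_mem hx hy ht
  have hd : ∀ t ∈ Set.Icc (0 : ℝ) 1,
      HasDerivAt (fun t : ℝ => g (x + t • (y - x)) - g x - t • g' x (y - x))
        ((g' (x + t • (y - x)) - g' x) (y - x)) t := by
    intro t ht
    have h1 : HasDerivAt (fun t : ℝ => x + t • (y - x)) (y - x) t := by
      simpa using ((hasDerivAt_id t).smul_const (y - x)).const_add x
    have h2 := (hder _ (hmem t ht)).comp_hasDerivAt t h1
    have h3 : HasDerivAt (fun t : ℝ => t • g' x (y - x)) (g' x (y - x)) t := by
      simpa using (hasDerivAt_id t).smul_const (g' x (y - x))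
    exact (h2.sub_const (g x)).sub h3
  have hB : ∀ t : ℝ, HasDerivAt
      (fun t : ℝ => H * ‖y - x‖ ^ (1 + ν) / (1 + ν) * t ^ (1 + ν))
      (H * ‖y - x‖ ^ (1 + ν) * t ^ ν) t := by
    intro t
    have h1 := (Real.hasDerivAt_rpow_const (x := t) (p := 1 + ν) (Or.inr (by linarith))).const_mul
      (H * ‖y - x‖ ^ (1 + ν) / (1 + ν))
    rw [add_sub_cancel_left] at h1
    refine h1.congr_deriv ?_
    field_simp
  have key := image_norm_le_of_norm_deriv_right_le_deriv_boundary (a := (0 : ℝ)) (b := 1)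
    (fun t ht => (hd t ht).continuousAt.continuousWithinAt)
    (fun t ht => (hd t ⟨ht.1, ht.2.le⟩).hasDerivWithinAt)
    (B := fun t : ℝ => H * ‖y - x‖ ^ (1 + ν) / (1 + ν) * t ^ (1 + ν))
    (B' := fun t : ℝ => H * ‖y - x‖ ^ (1 + ν) * t ^ ν)
    (by simp [Real.zero_rpow (by linarith : (1 + ν) ≠ 0)]) hB ?_
    (x := 1) ⟨zero_le_one, le_rfl⟩
  · simpa using key
  · intro t ht
    have h1 := hHolder _ (hmem t ⟨ht.1, ht.2.le⟩) x hx
    rw [add_sub_cancel_left, norm_smul, Real.norm_of_nonneg ht.1,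
      Real.mul_rpow ht.1 (norm_nonneg _)] at h1
    have h2 : ‖y - x‖ ^ (1 + ν) = ‖y - x‖ ^ ν * ‖y - x‖ := by
      rw [add_comm, Real.rpow_add_one' (norm_nonneg _) (by linarith)]
    calc _ ≤ ‖g' (x + t • (y - x)) - g' x‖ * ‖y - x‖ := ContinuousLinearMap.le_opNorm _ _
      _ ≤ H * (t ^ ν * ‖y - x‖ ^ ν) * ‖y - x‖ := by gcongr
      _ = _ := by rw [h2]; ring

/-- Lemma 2: estimating-function inequality for the
Contracting-Domain Newton Method I. `E` models `ℝⁿ` with an arbitrary norm;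
the gradient `∇f(x)` is the functional `f' x : E →L[ℝ] ℝ` and the Hessian
`∇²f(x)` is the bilinear form `f'' x`. `s = dom ψ`, `ψ` is `μ`-strongly convex
(`μ = 0` meaning merely convex) real-valued on `s`, `F = f + ψ`. `A k` are the
partial sums of the positive coefficients `a`, `γ k = a (k+1) / A (k+1)`, and
the iterates satisfy the stationarity condition of the method's subproblem and
the update rule `x_{k+1} = x_k + γ_k (v_{k+1} − x_k)`. The conclusion is
`A_k F(x_k) ≤ φ_k(x) + B_k(x)` for every `x ∈ dom ψ`. -/
theorem stmt_5 {E : Type*} [NormedAddCommGroup E] [NormedSpace ℝ E]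
    (s : Set E) (hs : Convex ℝ s)
    (μ : ℝ) (hμ : 0 ≤ μ) (ψ : E → ℝ) (hψ : StrongConvexOn s μ ψ)
    (f : E → ℝ) (f' : E → E →L[ℝ] ℝ) (f'' : E → E →L[ℝ] E →L[ℝ] ℝ)
    (hconv : ConvexOn ℝ s f)
    (hder1 : ∀ x ∈ s, HasFDerivAt f (f' x) x)
    (hder2 : ∀ x ∈ s, HasFDerivAt f' (f'' x) x)
    (hcont : ContinuousOn f'' s)
    (ν Hν : ℝ) (hν : ν ∈ Set.Icc (0 : ℝ) 1) (hH : 0 ≤ Hν)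
    (hHolder : ∀ x ∈ s, ∀ y ∈ s, ‖f'' x - f'' y‖ ≤ Hν * ‖x - y‖ ^ ν)
    (a : ℕ → ℝ) (ha : ∀ k, 1 ≤ k → 0 < a k)
    (A : ℕ → ℝ) (hA : ∀ k, A k = ∑ i ∈ Finset.Icc 1 k, a i)
    (γ : ℕ → ℝ) (hγ : ∀ k, γ k = a (k + 1) / A (k + 1))
    (x v : ℕ → E) (hx0 : x 0 ∈ s) (hv : ∀ k, v (k + 1) ∈ s)
    (hstat : ∀ k, ∀ y ∈ s,
      f' (x k) (y - v (k + 1)) + f'' (x k) (x (k + 1) - x k) (y - v (k + 1)) + ψ y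
        ≥ ψ (v (k + 1)) + μ / 2 * ‖y - v (k + 1)‖ ^ 2)
    (hupd : ∀ k, x (k + 1) = x k + γ k • (v (k + 1) - x k))
    (F : E → ℝ) (hF : ∀ y, F y = f y + ψ y)
    (φ : ℕ → E → ℝ)
    (hφ : ∀ k y, φ k y = ∑ i ∈ Finset.Icc 1 k, a i * (f (x i) + f' (x i) (y - x i) + ψ y))
    (B : ℕ → E → ℝ)
    (hB : ∀ k y, B k y = ∑ i ∈ Finset.Icc 1 k,
        (Hν * a i ^ (2 + ν) * ‖y - v i‖ * ‖x (i - 1) - v i‖ ^ (1 + ν)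
            / ((1 + ν) * A i ^ (1 + ν))
          - μ * a i * ‖y - v i‖ ^ 2 / 2
          - μ * a i * A (i - 1) * ‖x (i - 1) - v i‖ ^ 2 / (2 * A i))) :
    ∀ k, ∀ y ∈ s, A k * F (x k) ≤ φ k y + B k y := by
  have hA0 : A 0 = 0 := by simp [hA]
  have hAs : ∀ k, A (k + 1) = A k + a (k + 1) := fun k => by
    rw [hA, hA, Finset.sum_Icc_succ_top (by omega)]
  have hAnn : ∀ k, 0 ≤ A k := fun k => by
    rw [hA]
    exact Finset.sum_nonneg fun i hi => (ha i (Finset.mem_Icc.1 hi).1).le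
  have hap : ∀ k, 0 < a (k + 1) := fun k => ha _ (by omega)
  have hAp : ∀ k, 0 < A (k + 1) := fun k => by linarith [hAs k, hAnn k, hap k]
  have hγ0 : ∀ k, 0 ≤ γ k := fun k => by
    rw [hγ]; exact div_nonneg (hap k).le (hAp k).le
  have hγ1 : ∀ k, γ k ≤ 1 := fun k => by
    rw [hγ, div_le_one (hAp k)]; linarith [hAs k, hAnn k]
  have hxs : ∀ k, x k ∈ s := by
    intro k
    induction k with
    | zero => exact hx0
    | succ k ih =>
      rw [hupd]
      exact hs.add_smul_sub_mem ih (hv k) ⟨hγ0 k, hγ1 k⟩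
  intro k
  induction k with
  | zero => intro y _; simp [hφ, hB, hA0]
  | succ k ih =>
    intro y hy
    have ih := ih y hy
    have e1 : φ (k + 1) y = φ k y
        + a (k + 1) * (f (x (k + 1)) + f' (x (k + 1)) (y - x (k + 1)) + ψ y) := by
      rw [hφ, hφ, Finset.sum_Icc_succ_top (by omega)]
    have e2 : B (k + 1) y = B k y
        + (Hν * a (k + 1) ^ (2 + ν) * ‖y - v (k + 1)‖ * ‖x k - v (k + 1)‖ ^ (1 + ν)
            / ((1 + ν) * A (k + 1) ^ (1 + ν))
          - μ * a (k + 1) * ‖y - v (k + 1)‖ ^ 2 / 2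
          - μ * a (k + 1) * A k * ‖x k - v (k + 1)‖ ^ 2 / (2 * A (k + 1))) := by
      rw [hB, hB, Finset.sum_Icc_succ_top (by omega)]
      simp only [Nat.add_sub_cancel]
    have hg := grad_ineq hconv (hxs (k + 1)) (hxs k) (hder1 _ (hxs (k + 1)))
    have ht := taylor_bound hs hder2 hν.1 hHolder (hxs k) (hxs (k + 1))
    have hst := hstat k y hy
    have hsc := hψ.2 (hxs k) (hv k) (sub_nonneg.2 (hγ1 k)) (hγ0 k) (sub_add_cancel 1 (γ k))
    have hcomb : (1 - γ k) • x k + γ k • v (k + 1) = x (k + 1) := by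
      rw [hupd]; module
    rw [hcomb] at hsc
    have hup := hupd k
    have hγk := hγ k
    have hγA : γ k * A (k + 1) = a (k + 1) := by
      rw [hγk, div_mul_cancel₀ _ (hAp k).ne']
    have hγA' : (1 - γ k) * A (k + 1) = A k := by linarith [hAs k]
    have hnorm : ‖x (k + 1) - x k‖ = γ k * ‖x k - v (k + 1)‖ := by
      rw [hup, add_sub_cancel_left, norm_smul, Real.norm_of_nonneg (hγ0 k), norm_sub_rev]
    rw [hnorm, Real.mul_rpow (hγ0 k) (norm_nonneg _)] at ht
    have hT : -(Hν * (γ k ^ (1 + ν) * ‖x k - v (k + 1)‖ ^ (1 + ν)) / (1 + ν)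
          * ‖y - v (k + 1)‖)
        ≤ f' (x (k + 1)) (y - v (k + 1)) - f' (x k) (y - v (k + 1))
          - f'' (x k) (x (k + 1) - x k) (y - v (k + 1)) := by
      have h1 := ContinuousLinearMap.le_of_opNorm_le _ ht (y - v (k + 1))
      exact (abs_le.1 h1).1
    have hpow : a (k + 1) * γ k ^ (1 + ν) = a (k + 1) ^ (2 + ν) / A (k + 1) ^ (1 + ν) := by
      rw [hγk, Real.div_rpow (hap k).le (hAp k).le,
        show 2 + ν = 1 + (1 + ν) by ring, Real.rpow_add (hap k) 1 (1 + ν), Real.rpow_one,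
        mul_div_assoc]
    have e3 : Hν * a (k + 1) ^ (2 + ν) * ‖y - v (k + 1)‖ * ‖x k - v (k + 1)‖ ^ (1 + ν)
            / ((1 + ν) * A (k + 1) ^ (1 + ν))
        = a (k + 1) * (Hν * (γ k ^ (1 + ν) * ‖x k - v (k + 1)‖ ^ (1 + ν)) / (1 + ν)
          * ‖y - v (k + 1)‖) := by
      calc _ = (a (k + 1) ^ (2 + ν) / A (k + 1) ^ (1 + ν))
            * (Hν * ‖x k - v (k + 1)‖ ^ (1 + ν) / (1 + ν) * ‖y - v (k + 1)‖) := by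
              rw [mul_comm (1 + ν), ← div_div]; ring
        _ = _ := by rw [← hpow]; ring
    have e4 : μ * a (k + 1) * A k * ‖x k - v (k + 1)‖ ^ 2 / (2 * A (k + 1))
        = A k * γ k * (μ / 2 * ‖x k - v (k + 1)‖ ^ 2) := by
      rw [hγk]; field_simp
    -- The linear terms collapse because `A₊ x₊ = A_k x_k + a v`.
    have hlin : A k * f' (x (k + 1)) (x k - x (k + 1))
        + a (k + 1) * f' (x (k + 1)) (y - x (k + 1))
        = a (k + 1) * f' (x (k + 1)) (y - v (k + 1)) := by
      have h1 : f' (x (k + 1)) (x (k + 1))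
          = (1 - γ k) * f' (x (k + 1)) (x k) + γ k * f' (x (k + 1)) (v (k + 1)) := by
        conv_lhs => rw [← hcomb, map_add, map_smul, map_smul, hcomb]
        simp
      simp only [map_sub]
      linear_combination -A (k + 1) * h1 + f' (x (k + 1)) (x (k + 1)) * hAs k
        - f' (x (k + 1)) (x k) * hγA' - f' (x (k + 1)) (v (k + 1)) * hγA
    have hg' := mul_le_mul_of_nonneg_left hg (hAnn k)
    have hT' := mul_le_mul_of_nonneg_left hT (hap k).le
    have hst' := mul_le_mul_of_nonneg_left hst (hap k).le
    have hsc' := mul_le_mul_of_nonneg_left hsc (hAp k).le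
    simp only [smul_eq_mul] at hsc'
    have e5 : A (k + 1) * ((1 - γ k) * ψ (x k) + γ k * ψ (v (k + 1))
          - (1 - γ k) * γ k * (μ / 2 * ‖x k - v (k + 1)‖ ^ 2))
        = A k * ψ (x k) + a (k + 1) * ψ (v (k + 1))
          - A k * γ k * (μ / 2 * ‖x k - v (k + 1)‖ ^ 2) := by
      rw [← hγA', ← hγA]; ring
    rw [e5] at hsc'
    rw [hF] at ih ⊢
    rw [e1, e2, e3, e4]
    have hAf : A (k + 1) * f (x (k + 1)) = A k * f (x (k + 1)) + a (k + 1) * f (x (k + 1)) := by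
      rw [hAs]; ring
    linarith
end

section
/- Assume in addition that ψ is μ-strongly convex with μ > 0. Let A_k := k⁵, a_k := k⁵ − (k−1)⁵, γ_k := a_{k+1}/A_{k+1} = 1 − (k/(k+1))⁵, and let {x_k}, {v_k} be Contracting-Domain Newton iterates: x₀ ∈ dom ψ, v_{k+1} ∈ dom ψ satisfies ⟨∇f(x_k) + ∇²f(x_k)(x_{k+1} − x_k), x − v_{k+1}⟩ + ψ(x) ≥ ψ(v_{k+1}) + (μ/2)‖x − v_{k+1}‖² for all x ∈ dom ψ, and x_{k+1} := x_k + γ_k(v_{k+1} − x_k). Then for every k ≥ 1, F(x_k) − F* ≤ ℓ_k := F(x_k) − φ_k*/A_k ≤ (5^{3+2ν} H_ν² D^{2(1+ν)} / (2 μ (1+ν)² k⁵)) · Σ_{i=1}^k i^{2−2ν}; in particular ℓ_k = O((H_ν D^ν/μ) · H_ν D^{2+ν} / k^{2+2ν}). -/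
/-!
The iterates form an estimating sequence. Write `g = f'(x_k) + f''(x_k)(x_{k+1} - x_k)` for the
linearised gradient and `δ = f'(x_{k+1}) - g` for its error. The stationarity condition gives, for
every `y ∈ s`,
`f'(x_{k+1})(y - v_{k+1}) + ψ y ≥ ψ(v_{k+1}) + δ (y - v_{k+1}) + μ/2 ‖y - v_{k+1}‖²`,
and completing the square bounds the last two terms below by `-‖δ‖² / (2μ)`. Since `x_{k+1}` is the
average of `x_k` and `v_{k+1}` with weights `A_k` and `a_{k+1}`, convexity of `f` and `ψ` turns this
into
`A_{k+1} F(x_{k+1}) ≤ A_k F(x_k) + (φ_{k+1} - φ_k)(y) + a_{k+1} ‖δ‖² / (2μ)`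
(`estimating_step`), which telescopes.

Hölder continuity of `f''` gives `‖δ‖ ≤ Hν ‖x_{k+1} - x_k‖^(1+ν) / (1+ν)` (`norm_taylor_le`), and
`‖x_{k+1} - x_k‖ ≤ γ_k D` with `γ_k ≤ 5 / (k+1)`, so the error of step `i` is a multiple of
`5 i⁴ (5 / i)^(2(1+ν)) = 5^(3+2ν) i^(2-2ν)`. The final rate bounds each summand by `k^(2-2ν)`.
-/

/-- First-order characterisation of convexity, with the derivative taken in the ambient space. -/
lemma ConvexOn.add_fderiv_le {E : Type*} [NormedAddCommGroup E] [NormedSpace ℝ E]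
    {s : Set E} {f : E → ℝ} {L : E →L[ℝ] ℝ} {x y : E} (hf : ConvexOn ℝ s f)
    (hL : HasFDerivAt f L x) (hx : x ∈ s) (hy : y ∈ s) : f x + L (y - x) ≤ f y := by
  have hline : HasDerivAt (fun t : ℝ => f (x + t • (y - x))) (L (y - x)) 0 := by
    have h1 : HasDerivAt (fun t : ℝ => x + t • (y - x)) (y - x) 0 := by
      simpa using ((hasDerivAt_id (0 : ℝ)).smul_const (y - x)).const_add x
    have h2 : HasFDerivAt f L (x + (0 : ℝ) • (y - x)) := by simpa using hL
    exact h2.comp_hasDerivAt (0 : ℝ) h1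
  have hslope := hline.tendsto_slope_zero_right
  have hle : ∀ᶠ t : ℝ in nhdsWithin 0 (Set.Ioi 0),
      t⁻¹ • (f (x + (0 + t) • (y - x)) - f (x + (0 : ℝ) • (y - x))) ≤ f y - f x := by
    filter_upwards [Ioo_mem_nhdsGT (show (0 : ℝ) < 1 by norm_num)] with t ht
    have h := hf.2 hx hy (sub_nonneg.2 ht.2.le) ht.1.le (by ring)
    have e : (1 - t) • x + t • y = x + t • (y - x) := by module
    rw [e] at h
    simp only [smul_eq_mul, zero_add, zero_smul, add_zero] at h ⊢
    rw [inv_mul_le_iff₀ ht.1]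
    linarith
  linarith [le_of_tendsto hslope hle]

/-- Linearisation error of the gradient under a Hölder bound on the Hessian. -/
lemma norm_taylor_le {E : Type*} [NormedAddCommGroup E] [NormedSpace ℝ E]
    {s : Set E} (hs : Convex ℝ s) {f' : E → E →L[ℝ] ℝ} {f'' : E → E →L[ℝ] E →L[ℝ] ℝ}
    (hder : ∀ x ∈ s, HasFDerivAt f' (f'' x) x) {ν H : ℝ} (hν : 0 ≤ ν)
    (hHolder : ∀ x ∈ s, ∀ y ∈ s, ‖f'' x - f'' y‖ ≤ H * ‖x - y‖ ^ ν)
    {x y : E} (hx : x ∈ s) (hy : y ∈ s) :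
    ‖f' y - (f' x + f'' x (y - x))‖ ≤ H * ‖y - x‖ ^ (1 + ν) / (1 + ν) := by
  set h := y - x with hh
  have hmem : ∀ t ∈ Set.Icc (0 : ℝ) 1, x + t • h ∈ s := fun t ht =>
    hs.add_smul_sub_mem hx hy ht
  have hder' : ∀ t ∈ Set.Icc (0 : ℝ) 1,
      HasDerivAt (fun t : ℝ => f' (x + t • h) - (f' x + t • f'' x h))
        (f'' (x + t • h) h - f'' x h) t := by
    intro t ht
    have h1 : HasDerivAt (fun t : ℝ => x + t • h) h t := by
      simpa using ((hasDerivAt_id t).smul_const h).const_add x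
    have h2 : HasDerivAt (fun t : ℝ => f' x + t • f'' x h) (f'' x h) t := by
      simpa using ((hasDerivAt_id t).smul_const (f'' x h)).const_add (f' x)
    exact ((hder _ (hmem t ht)).comp_hasDerivAt t h1).sub h2
  have hB : ∀ t : ℝ, HasDerivAt (fun t : ℝ => H * ‖h‖ ^ (1 + ν) * (t ^ (1 + ν) / (1 + ν)))
      (H * ‖h‖ ^ (1 + ν) * t ^ ν) t := by
    intro t
    have h1 := ((Real.hasDerivAt_rpow_const (x := t) (p := 1 + ν)
      (Or.inr (by linarith))).div_const (1 + ν)).const_mul (H * ‖h‖ ^ (1 + ν))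
    have e : (1 + ν) * t ^ (1 + ν - 1) / (1 + ν) = t ^ ν := by
      rw [add_sub_cancel_left]
      field_simp
    rwa [e] at h1
  have key := image_norm_le_of_norm_deriv_right_le_deriv_boundary
    (f := fun t : ℝ => f' (x + t • h) - (f' x + t • f'' x h))
    (f' := fun t : ℝ => f'' (x + t • h) h - f'' x h) (a := 0) (b := 1)
    (B := fun t : ℝ => H * ‖h‖ ^ (1 + ν) * (t ^ (1 + ν) / (1 + ν)))
    (B' := fun t : ℝ => H * ‖h‖ ^ (1 + ν) * t ^ ν)
    (fun t ht => (hder' t ht).continuousAt.continuousWithinAt)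
    (fun t ht => (hder' t ⟨ht.1, ht.2.le⟩).hasDerivWithinAt)
    (by simp [Real.zero_rpow (show 1 + ν ≠ 0 by linarith)]) hB
    (by
      intro t ht
      have h1 := hHolder _ (hmem t ⟨ht.1, ht.2.le⟩) x hx
      rw [add_sub_cancel_left, norm_smul, Real.norm_of_nonneg ht.1,
        Real.mul_rpow ht.1 (norm_nonneg h)] at h1
      calc ‖f'' (x + t • h) h - f'' x h‖ = ‖(f'' (x + t • h) - f'' x) h‖ := rfl
        _ ≤ ‖f'' (x + t • h) - f'' x‖ * ‖h‖ := ContinuousLinearMap.le_opNorm _ _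
        _ ≤ H * (t ^ ν * ‖h‖ ^ ν) * ‖h‖ := by gcongr
        _ = H * ‖h‖ ^ (1 + ν) * t ^ ν := by
          rw [Real.rpow_one_add' (norm_nonneg h) (by linarith)]; ring)
    (Set.right_mem_Icc.2 zero_le_one)
  have e : x + (y - x) = y := by abel
  rw [one_smul, one_smul, Real.one_rpow, mul_one_div, hh, e] at key
  exact key

/-- One step of the estimating sequence: `α`, `β` are the weights of the old point `x` and of the
subproblem solution `v`, `L` is the gradient at the new point `z`, and `g` the linearised gradient
for which `v` is stationary. -/
lemma estimating_step {E : Type*} [NormedAddCommGroup E] [NormedSpace ℝ E]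
    {s : Set E} {μ : ℝ} (hμ : 0 < μ) {ψ f : E → ℝ} (hψ : ConvexOn ℝ s ψ)
    {x z v y : E} {L g : E →L[ℝ] ℝ} {α β d : ℝ} (hα : 0 ≤ α) (hβ : 0 < β)
    (hx : x ∈ s) (hv : v ∈ s)
    (hz : (α + β) • z = α • x + β • v)
    (hf : f z + L (x - z) ≤ f x)
    (hstat : ψ v + μ / 2 * ‖y - v‖ ^ 2 ≤ g (y - v) + ψ y)
    (hd : ‖L - g‖ ≤ d) :
    (α + β) * (f z + ψ z) ≤
      α * (f x + ψ x) + β * (f z + L (y - z) + ψ y) + β * (d ^ 2 / (2 * μ)) := by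
  have hab : 0 < α + β := by linarith
  have hψz : (α + β) * ψ z ≤ α * ψ x + β * ψ v := by
    have h := hψ.2 hx hv (show 0 ≤ α / (α + β) by positivity)
      (show 0 ≤ β / (α + β) by positivity) (by field_simp)
    have e : (α / (α + β)) • x + (β / (α + β)) • v = z := by
      have : z = (α + β)⁻¹ • ((α + β) • z) := by
        rw [smul_smul, inv_mul_cancel₀ hab.ne', one_smul]
      rw [this, hz, smul_add, smul_smul, smul_smul]
      congr 2 <;> ring
    rw [e] at h
    simp only [smul_eq_mul] at h
    have h2 := mul_le_mul_of_nonneg_left h hab.le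
    have e2 : (α + β) * (α / (α + β) * ψ x + β / (α + β) * ψ v) = α * ψ x + β * ψ v := by
      field_simp
    linarith
  have hLz : α * L (x - z) + β * L (v - z) = 0 := by
    have h0 : α • (x - z) + β • (v - z) = 0 := by
      have : α • (x - z) + β • (v - z) = (α • x + β • v) - (α + β) • z := by module
      rw [this, hz, sub_self]
    have h1 := congrArg L h0
    simpa using h1
  have hsq : -(d ^ 2 / (2 * μ)) ≤ (L - g) (y - v) + μ / 2 * ‖y - v‖ ^ 2 := by
    have h1 : |(L - g) (y - v)| ≤ d * ‖y - v‖ :=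
      ((L - g).le_opNorm (y - v)).trans (by gcongr)
    have h2 := (abs_le.1 h1).1
    have h3 : 0 ≤ (d - μ * ‖y - v‖) ^ 2 / (2 * μ) := by positivity
    have h4 : (d - μ * ‖y - v‖) ^ 2 / (2 * μ)
        = d ^ 2 / (2 * μ) - d * ‖y - v‖ + μ / 2 * ‖y - v‖ ^ 2 := by
      field_simp
      ring
    linarith
  have hsplit : L (y - z) = L (v - z) + (L - g) (y - v) + g (y - v) := by
    have : y - z = (v - z) + (y - v) := by abel
    rw [this, map_add, sub_apply]
    ring
  have hα' := mul_le_mul_of_nonneg_left hf hα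
  have hβ' : β * (ψ v - d ^ 2 / (2 * μ)) ≤ β * (L (y - z) - L (v - z) + ψ y) :=
    mul_le_mul_of_nonneg_left (by rw [hsplit]; linarith) hβ.le
  nlinarith

/-- The error term of step `m`: `β` is the weight `a_m`, and `β / m ^ 5 * D` is the bound
`γ_{m-1} D` on `‖x_m - x_{m-1}‖`. -/
lemma step_error_le {μ D H ν β m : ℝ} (hμ : 0 < μ) (hD : 0 ≤ D) (hν : 0 ≤ ν)
    (hm : 0 < m) (hβ0 : 0 ≤ β) (hβ : β ≤ 5 * m ^ 4) :
    β * ((H * (β / m ^ 5 * D) ^ (1 + ν) / (1 + ν)) ^ 2 / (2 * μ)) ≤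
      (5 : ℝ) ^ (3 + 2 * ν) * H ^ 2 * D ^ (2 * (1 + ν)) / (2 * μ * (1 + ν) ^ 2)
        * m ^ (2 - 2 * ν) := by
  have hγ : β / m ^ 5 ≤ 5 / m := by
    rw [div_le_div_iff₀ (by positivity) hm]
    nlinarith
  have hsq : ∀ t : ℝ, 0 ≤ t → (t ^ (1 + ν)) ^ 2 = t ^ (2 * (1 + ν)) := by
    intro t ht
    rw [← Real.rpow_natCast, ← Real.rpow_mul ht]
    congr 1
    push_cast
    ring
  have e5 : (5 : ℝ) * 5 ^ (2 * (1 + ν)) = 5 ^ (3 + 2 * ν) := by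
    rw [← Real.rpow_one_add' (by norm_num) (by linarith)]
    congr 1
    ring
  have em : m ^ 4 / m ^ (2 * (1 + ν)) = m ^ (2 - 2 * ν) := by
    rw [← Real.rpow_natCast, ← Real.rpow_sub hm]
    congr 1
    push_cast
    ring
  calc β * ((H * (β / m ^ 5 * D) ^ (1 + ν) / (1 + ν)) ^ 2 / (2 * μ))
      = β * (β / m ^ 5) ^ (2 * (1 + ν)) * (H ^ 2 * D ^ (2 * (1 + ν)) / (2 * μ * (1 + ν) ^ 2)) := by
        rw [Real.mul_rpow (by positivity) hD, ← hsq _ (by positivity), ← hsq _ hD]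
        field_simp
    _ ≤ (5 * m ^ 4) * (5 / m) ^ (2 * (1 + ν))
          * (H ^ 2 * D ^ (2 * (1 + ν)) / (2 * μ * (1 + ν) ^ 2)) := by
        gcongr
    _ = _ := by
        rw [Real.div_rpow (by norm_num) hm.le, ← e5, ← em]
        ring

/-- Theorem 2, first part: `O(1/k^{2+2ν})` rate of the
Contracting-Domain Newton Method I under `μ`-strong convexity of the composite
part `ψ`. Setup as in Statement 6, with `A_k = k⁵`, `a_k = k⁵ − (k−1)⁵`,
`γ_k = a_{k+1}/A_{k+1} = 1 − (k/(k+1))⁵`, and the stationarity condition of the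
strongly convex subproblem. -/
theorem stmt_7 {E : Type*} [NormedAddCommGroup E] [NormedSpace ℝ E]
    (s : Set E) (hs : Convex ℝ s)
    (μ : ℝ) (hμ : 0 < μ) (ψ : E → ℝ) (hψ : StrongConvexOn s μ ψ)
    (D : ℝ) (hD : ∀ x ∈ s, ∀ y ∈ s, ‖x - y‖ ≤ D)
    (f : E → ℝ) (f' : E → E →L[ℝ] ℝ) (f'' : E → E →L[ℝ] E →L[ℝ] ℝ)
    (hconv : ConvexOn ℝ s f)
    (hder1 : ∀ x ∈ s, HasFDerivAt f (f' x) x)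
    (hder2 : ∀ x ∈ s, HasFDerivAt f' (f'' x) x)
    (hcont : ContinuousOn f'' s)
    (ν Hν : ℝ) (hν : ν ∈ Set.Icc (0 : ℝ) 1) (hH : 0 ≤ Hν)
    (hHolder : ∀ x ∈ s, ∀ y ∈ s, ‖f'' x - f'' y‖ ≤ Hν * ‖x - y‖ ^ ν)
    (a : ℕ → ℝ) (ha : ∀ k, a k = (k : ℝ) ^ 5 - ((k : ℝ) - 1) ^ 5)
    (A : ℕ → ℝ) (hA : ∀ k, A k = (k : ℝ) ^ 5)
    (γ : ℕ → ℝ) (hγ : ∀ k, γ k = a (k + 1) / A (k + 1))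
    (hγ' : ∀ k, γ k = 1 - ((k : ℝ) / ((k : ℝ) + 1)) ^ 5)
    (x v : ℕ → E) (hx0 : x 0 ∈ s) (hv : ∀ k, v (k + 1) ∈ s)
    (hstat : ∀ k, ∀ y ∈ s,
      f' (x k) (y - v (k + 1)) + f'' (x k) (x (k + 1) - x k) (y - v (k + 1)) + ψ y
        ≥ ψ (v (k + 1)) + μ / 2 * ‖y - v (k + 1)‖ ^ 2)
    (hupd : ∀ k, x (k + 1) = x k + γ k • (v (k + 1) - x k))
    (F : E → ℝ) (hF : ∀ y, F y = f y + ψ y)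
    (Fstar : ℝ) (hFstar : Fstar = sInf (F '' s))
    (φ : ℕ → E → ℝ)
    (hφ : ∀ k y, φ k y = ∑ i ∈ Finset.Icc 1 k, a i * (f (x i) + f' (x i) (y - x i) + ψ y))
    (ℓ : ℕ → ℝ) (hℓ : ∀ k, ℓ k = F (x k) - sInf (φ k '' s) / A k) :
    (∀ k, 1 ≤ k →
      F (x k) - Fstar ≤ ℓ k ∧
      ℓ k ≤ (5 : ℝ) ^ (3 + 2 * ν) * Hν ^ 2 * D ^ (2 * (1 + ν))
              / (2 * μ * (1 + ν) ^ 2 * (k : ℝ) ^ 5)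
            * ∑ i ∈ Finset.Icc 1 k, (i : ℝ) ^ (2 - 2 * ν)) ∧
    ∃ C : ℝ, 0 < C ∧ ∀ k, 1 ≤ k →
      ℓ k ≤ C * (Hν * D ^ ν / μ) * (Hν * D ^ (2 + ν) / (k : ℝ) ^ (2 + 2 * ν)) := by
  have hν0 : 0 ≤ ν := hν.1
  have hν1 : ν ≤ 1 := hν.2
  have hD0 : 0 ≤ D := by simpa using hD _ hx0 _ hx0
  have hψc : ConvexOn ℝ s ψ := hψ.convexOn (fun r => by positivity)
  have hγ01 : ∀ k, 0 ≤ γ k ∧ γ k ≤ 1 := by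
    intro k
    rw [hγ' k]
    have h1 : (k : ℝ) / (k + 1) ≤ 1 := by
      rw [div_le_one (by positivity)]
      linarith
    have h0 : 0 ≤ (k : ℝ) / (k + 1) := by positivity
    exact ⟨sub_nonneg.2 (pow_le_one₀ h0 h1), by linarith [pow_nonneg h0 5]⟩
  have hxs : ∀ k, x k ∈ s := by
    intro k
    induction k with
    | zero => exact hx0
    | succ k ih =>
      rw [hupd k]
      exact hs.add_smul_sub_mem ih (hv k) (hγ01 k)
  have ha' : ∀ k : ℕ, a (k + 1) = ((k : ℝ) + 1) ^ 5 - (k : ℝ) ^ 5 := by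
    intro k
    rw [ha]
    push_cast
    ring
  have hapos : ∀ k : ℕ, 0 < a (k + 1) := by
    intro k
    rw [ha']
    have : (0 : ℝ) ≤ k := k.cast_nonneg
    ring_nf
    positivity
  have hale : ∀ k : ℕ, a (k + 1) ≤ 5 * ((k : ℝ) + 1) ^ 4 := by
    intro k
    rw [ha']
    have h : (0 : ℝ) ≤ k := k.cast_nonneg
    have : 5 * ((k : ℝ) + 1) ^ 4 - (((k : ℝ) + 1) ^ 5 - (k : ℝ) ^ 5)
      = 10 * (k : ℝ) ^ 3 + 20 * (k : ℝ) ^ 2 + 15 * k + 4 := by ring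
    have : (0 : ℝ) ≤ 10 * (k : ℝ) ^ 3 + 20 * (k : ℝ) ^ 2 + 15 * k + 4 := by positivity
    linarith
  set K := (5 : ℝ) ^ (3 + 2 * ν) * Hν ^ 2 * D ^ (2 * (1 + ν)) / (2 * μ * (1 + ν) ^ 2) with hK
  have hK0 : 0 ≤ K := by positivity
  have hφs : ∀ k y, φ (k + 1) y = φ k y
      + a (k + 1) * (f (x (k + 1)) + f' (x (k + 1)) (y - x (k + 1)) + ψ y) := by
    intro k y
    rw [hφ, hφ, Finset.sum_Icc_succ_top (by omega)]
  have hmain : ∀ k : ℕ, ∀ y ∈ s, (k : ℝ) ^ 5 * F (x k) ≤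
      φ k y + K * ∑ i ∈ Finset.Icc 1 k, (i : ℝ) ^ (2 - 2 * ν) := by
    intro k y hy
    induction k with
    | zero => simp [hφ]
    | succ k ih =>
      have hm : (0 : ℝ) < (k : ℝ) + 1 := by positivity
      have hγk : γ k = a (k + 1) / ((k : ℝ) + 1) ^ 5 := by
        rw [hγ, hA]
        push_cast
        rfl
      have hstep : ‖x (k + 1) - x k‖ ≤ a (k + 1) / ((k : ℝ) + 1) ^ 5 * D := by
        rw [hupd k, add_sub_cancel_left, norm_smul, Real.norm_of_nonneg (hγ01 k).1, ← hγk]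
        exact mul_le_mul_of_nonneg_left (hD _ (hv k) _ (hxs k)) (hγ01 k).1
      have hz : ((k : ℝ) ^ 5 + a (k + 1)) • x (k + 1)
          = (k : ℝ) ^ 5 • x k + a (k + 1) • v (k + 1) := by
        have e1 : (k : ℝ) ^ 5 + a (k + 1) = ((k : ℝ) + 1) ^ 5 := by rw [ha']; ring
        have e2 : ((k : ℝ) + 1) ^ 5 * γ k = a (k + 1) := by rw [hγk]; field_simp
        rw [hupd k, smul_add, smul_smul, e1, e2, ← e1]
        module
      have hd : ‖f' (x (k + 1)) - (f' (x k) + f'' (x k) (x (k + 1) - x k))‖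
          ≤ Hν * (a (k + 1) / ((k : ℝ) + 1) ^ 5 * D) ^ (1 + ν) / (1 + ν) :=
        (norm_taylor_le hs hder2 hν0 hHolder (hxs k) (hxs (k + 1))).trans (by gcongr)
      have h1 := estimating_step hμ hψc (α := (k : ℝ) ^ 5) (β := a (k + 1)) (y := y)
        (by positivity) (hapos k) (hxs k) (hv k) hz
        (hconv.add_fderiv_le (hder1 _ (hxs (k + 1))) (hxs (k + 1)) (hxs k))
        (hstat k y hy) hd
      have h2 := step_error_le (H := Hν) hμ hD0 hν0 hm (hapos k).le (hale k)
      rw [← hK] at h2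
      rw [← hF, ← hF, show (k : ℝ) ^ 5 + a (k + 1) = ((k : ℝ) + 1) ^ 5 by rw [ha']; ring] at h1
      rw [hφs, Finset.sum_Icc_succ_top (by omega), mul_add]
      push_cast
      linarith
  have hφF : ∀ k, ∀ y ∈ s, φ k y ≤ (k : ℝ) ^ 5 * F y := by
    intro k y hy
    induction k with
    | zero => simp [hφ]
    | succ k ih =>
      have h1 := hconv.add_fderiv_le (hder1 _ (hxs (k + 1))) (hxs (k + 1)) hy
      have h2 : a (k + 1) * (f (x (k + 1)) + f' (x (k + 1)) (y - x (k + 1)) + ψ y)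
          ≤ a (k + 1) * F y := by
        rw [hF]
        exact mul_le_mul_of_nonneg_left (by linarith) (hapos k).le
      rw [hφs]
      rw [ha'] at h2 ⊢
      push_cast
      linarith
  have hbound : ∀ k, 1 ≤ k →
      ℓ k ≤ K / (k : ℝ) ^ 5 * ∑ i ∈ Finset.Icc 1 k, (i : ℝ) ^ (2 - 2 * ν) := by
    intro k hk
    have hk0 : (0 : ℝ) < (k : ℝ) ^ 5 := by positivity
    have h1 : (k : ℝ) ^ 5 * F (x k) - K * ∑ i ∈ Finset.Icc 1 k, (i : ℝ) ^ (2 - 2 * ν)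
        ≤ sInf (φ k '' s) := by
      apply le_csInf (Set.Nonempty.image _ ⟨_, hx0⟩)
      rintro _ ⟨y, hy, rfl⟩
      linarith [hmain k y hy]
    rw [hℓ, hA, div_mul_eq_mul_div, sub_le_iff_le_add, ← add_div, le_div_iff₀ hk0]
    linarith
  refine ⟨fun k hk => ⟨?_, ?_⟩, 5 ^ (3 + 2 * ν) / (2 * (1 + ν) ^ 2), by positivity, ?_⟩
  · have hk0 : (0 : ℝ) < (k : ℝ) ^ 5 := by positivity
    have hbdd : BddBelow (φ k '' s) := by
      refine ⟨(k : ℝ) ^ 5 * F (x k) - K * ∑ i ∈ Finset.Icc 1 k, (i : ℝ) ^ (2 - 2 * ν), ?_⟩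
      rintro _ ⟨y, hy, rfl⟩
      linarith [hmain k y hy]
    have h1 : sInf (φ k '' s) / (k : ℝ) ^ 5 ≤ Fstar := by
      rw [hFstar]
      apply le_csInf (Set.Nonempty.image _ ⟨_, hx0⟩)
      rintro _ ⟨y, hy, rfl⟩
      rw [div_le_iff₀' hk0]
      exact (csInf_le hbdd ⟨y, hy, rfl⟩).trans (hφF k y hy)
    rw [hℓ, hA]
    linarith
  · have h := hbound k hk
    rwa [hK, div_div] at h
  · intro k hk
    have hk0 : (0 : ℝ) < k := by positivity
    have hsum : ∑ i ∈ Finset.Icc 1 k, (i : ℝ) ^ (2 - 2 * ν) ≤ k * (k : ℝ) ^ (2 - 2 * ν) := by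
      have h := Finset.sum_le_card_nsmul (Finset.Icc 1 k) (fun i : ℕ => (i : ℝ) ^ (2 - 2 * ν))
        ((k : ℝ) ^ (2 - 2 * ν)) (fun i hi => by
          have := (Finset.mem_Icc.1 hi).2
          have hi' : (i : ℝ) ≤ k := by exact_mod_cast this
          exact Real.rpow_le_rpow (by positivity) hi' (by linarith))
      simpa using h
    have ek : (k : ℝ) * (k : ℝ) ^ (2 - 2 * ν) / (k : ℝ) ^ 5 = 1 / (k : ℝ) ^ (2 + 2 * ν) := by
      have h5 : (k : ℝ) ^ 5 = k * ((k : ℝ) ^ (2 - 2 * ν) * (k : ℝ) ^ (2 + 2 * ν)) := by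
        rw [← Real.rpow_add hk0, show 2 - 2 * ν + (2 + 2 * ν) = ((4 : ℕ) : ℝ) by push_cast; ring,
          Real.rpow_natCast]
        ring
      have := Real.rpow_pos_of_pos hk0 (2 - 2 * ν)
      have := Real.rpow_pos_of_pos hk0 (2 + 2 * ν)
      rw [h5]
      field_simp
    have eD : D ^ (2 * (1 + ν)) = D ^ ν * D ^ (2 + ν) := by
      rw [← Real.rpow_add_of_nonneg hD0 hν0 (by linarith)]
      congr 1
      ring
    calc ℓ k ≤ K / (k : ℝ) ^ 5 * ∑ i ∈ Finset.Icc 1 k, (i : ℝ) ^ (2 - 2 * ν) := hbound k hk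
      _ ≤ K / (k : ℝ) ^ 5 * (k * (k : ℝ) ^ (2 - 2 * ν)) := by gcongr
      _ = K * (k * (k : ℝ) ^ (2 - 2 * ν) / (k : ℝ) ^ 5) := by ring
      _ = _ := by
        rw [ek, hK, eD]
        field_simp
end

section
/- For Quadratic Estimating Functions Q_k(x) := Σ_{i=0}^{k−1} a_{i+1}[f(x_i) + ⟨∇f(x_i), x − x_i⟩ + (γ_i/2)⟨∇²f(x_i)(x − x_i), x − x_i⟩ + ψ(x)], built from any points x_i ∈ dom ψ and coefficients a_{i+1} > 0, A_k := Σ_{i=1}^k a_i, γ_i := a_{i+1}/A_{i+1}, it holds for all x ∈ dom ψ and all k ≥ 0 that A_k F(x) ≥ Q_k(x) − C_k/2, where C_k := (2 H_ν D^{2+ν}/((1+ν)(2+ν))) Σ_{i=0}^{k−1} a_{i+1} γ_i^{1+ν}. -/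
/-!
The claim is a weighted sum of one-point estimates. For `x, y ∈ s`, `h = y - x` and `γ ∈ (0, 1]`,
Taylor's formula along the segment from `x` to `y` and the Hölder condition on `f''` give
`f (x + γ h) ≥ f x + γ f' x h + γ² / 2 * f'' x h h - H ‖h‖^(2+ν) γ^(2+ν) / ((1+ν)(2+ν))`
(`taylor_lower`), while convexity gives `f (x + γ h) ≤ (1 - γ) f x + γ f y`. Combining the two and
dividing by `γ` bounds `f y` from below by a quadratic model whose curvature is contracted by `γ`
and whose error is only of order `γ^(1+ν)` (`contracted_lower`). Multiplying by `a (i+1)` and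
summing over `i < k` yields the result, the weights adding up to `A k`.
-/

/-- A one-sided second-order Taylor estimate on `[0, 1]`: a lower Hölder-type bound on the second
derivative, relative to its value at `0`, is integrated twice. -/
lemma taylor_lower (φ φ' φ'' : ℝ → ℝ) (M ν : ℝ) (hν : 0 ≤ ν)
    (h1 : ∀ t ∈ Set.Icc (0 : ℝ) 1, HasDerivAt φ (φ' t) t)
    (h2 : ∀ t ∈ Set.Icc (0 : ℝ) 1, HasDerivAt φ' (φ'' t) t)
    (h3 : ∀ t ∈ Set.Icc (0 : ℝ) 1, φ'' 0 - M * t ^ ν ≤ φ'' t)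
    (t : ℝ) (ht : t ∈ Set.Icc (0 : ℝ) 1) :
    φ 0 + t * φ' 0 + t ^ 2 / 2 * φ'' 0 - M * t ^ (2 + ν) / ((1 + ν) * (2 + ν)) ≤ φ t := by
  have h0 : (0 : ℝ) ∈ Set.Icc (0 : ℝ) 1 := by simp
  have n1 : (1 + ν) ≠ 0 := by linarith
  have n2 : (2 + ν) ≠ 0 := by linarith
  have d1 : ∀ t ∈ Set.Icc (0 : ℝ) 1,
      HasDerivAt (fun t => φ' t - φ' 0 - t * φ'' 0 + M / (1 + ν) * t ^ (1 + ν))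
        (φ'' t - φ'' 0 + M * t ^ ν) t := by
    intro t ht
    have e := (Real.hasDerivAt_rpow_const (x := t) (p := 1 + ν)
      (Or.inr (by linarith))).const_mul (M / (1 + ν))
    refine ((((h2 t ht).sub_const (φ' 0)).sub
      ((hasDerivAt_id' t).mul_const (φ'' 0))).add e).congr_deriv ?_
    rw [show 1 + ν - 1 = ν by ring]
    field_simp
  have g1 : ∀ t ∈ Set.Icc (0 : ℝ) 1,
      0 ≤ φ' t - φ' 0 - t * φ'' 0 + M / (1 + ν) * t ^ (1 + ν) := by
    have m : MonotoneOn (fun t => φ' t - φ' 0 - t * φ'' 0 + M / (1 + ν) * t ^ (1 + ν))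
        (Set.Icc (0 : ℝ) 1) := by
      refine monotoneOn_of_hasDerivWithinAt_nonneg (convex_Icc 0 1)
        (fun t ht => (d1 t ht).continuousAt.continuousWithinAt)
        (fun t ht => (d1 t (interior_subset ht)).hasDerivWithinAt) (fun t ht => ?_)
      have := h3 t (interior_subset ht)
      linarith
    intro t ht
    have := m h0 ht ht.1
    simpa [Real.zero_rpow n1] using this
  have d2 : ∀ t ∈ Set.Icc (0 : ℝ) 1,
      HasDerivAt (fun t => φ t - φ 0 - t * φ' 0 - t ^ 2 * (φ'' 0 / 2)
          + M / ((1 + ν) * (2 + ν)) * t ^ (2 + ν))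
        (φ' t - φ' 0 - t * φ'' 0 + M / (1 + ν) * t ^ (1 + ν)) t := by
    intro t ht
    have e := (Real.hasDerivAt_rpow_const (x := t) (p := 2 + ν)
      (Or.inr (by linarith))).const_mul (M / ((1 + ν) * (2 + ν)))
    refine (((((h1 t ht).sub_const (φ 0)).sub ((hasDerivAt_id' t).mul_const (φ' 0))).sub
      ((hasDerivAt_pow 2 t).mul_const (φ'' 0 / 2))).add e).congr_deriv ?_
    rw [show 2 + ν - 1 = 1 + ν by ring]
    field_simp
    norm_num
    ring
  have m : MonotoneOn (fun t => φ t - φ 0 - t * φ' 0 - t ^ 2 * (φ'' 0 / 2)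
      + M / ((1 + ν) * (2 + ν)) * t ^ (2 + ν)) (Set.Icc (0 : ℝ) 1) :=
    monotoneOn_of_hasDerivWithinAt_nonneg (convex_Icc 0 1)
      (fun t ht => (d2 t ht).continuousAt.continuousWithinAt)
      (fun t ht => (d2 t (interior_subset ht)).hasDerivWithinAt)
      (fun t ht => g1 t (interior_subset ht))
  have := m h0 ht ht.1
  simp only [Real.zero_rpow n2] at this
  ring_nf at this ⊢
  linarith

/-- The lower bound at a single test point: contracting the curvature of the quadratic model by
`γ` reduces the error to order `γ ^ (1 + ν)`, because the model is compared with `f` only at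
`x + γ (y - x)` and convexity carries the comparison on to `y`. -/
lemma contracted_lower {E : Type*} [NormedAddCommGroup E] [NormedSpace ℝ E]
    (s : Set E) (D : ℝ) (hD : ∀ x ∈ s, ∀ y ∈ s, ‖x - y‖ ≤ D)
    (f : E → ℝ) (f' : E → E →L[ℝ] ℝ) (f'' : E → E →L[ℝ] E →L[ℝ] ℝ)
    (hconv : ConvexOn ℝ s f)
    (hder1 : ∀ x ∈ s, HasFDerivAt f (f' x) x)
    (hder2 : ∀ x ∈ s, HasFDerivAt f' (f'' x) x)
    (ν H : ℝ) (hν : 0 ≤ ν) (hH : 0 ≤ H)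
    (hHolder : ∀ x ∈ s, ∀ y ∈ s, ‖f'' x - f'' y‖ ≤ H * ‖x - y‖ ^ ν)
    (x y : E) (hx : x ∈ s) (hy : y ∈ s) (γ : ℝ) (hγ0 : 0 < γ) (hγ1 : γ ≤ 1) :
    f x + f' x (y - x) + γ / 2 * f'' x (y - x) (y - x)
      - H * D ^ (2 + ν) / ((1 + ν) * (2 + ν)) * γ ^ (1 + ν) ≤ f y := by
  have hDh : ‖y - x‖ ≤ D := hD y hy x hx
  set h := y - x with hh
  have hmem : ∀ t ∈ Set.Icc (0 : ℝ) 1, x + t • h ∈ s :=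
    fun t ht => hconv.1.add_smul_sub_mem hx hy ht
  have hline : ∀ t : ℝ, HasDerivAt (fun t : ℝ => x + t • h) h t := by
    intro t
    simpa using ((hasDerivAt_id t).smul_const h).const_add x
  have hpow : ‖h‖ ^ (2 + ν) = ‖h‖ ^ ν * (‖h‖ * ‖h‖) := by
    rw [Real.rpow_add_of_nonneg (norm_nonneg _) (by norm_num) hν, Real.rpow_two]
    ring
  have hd2 : ∀ t ∈ Set.Icc (0 : ℝ) 1,
      HasDerivAt (fun t : ℝ => f' (x + t • h) h) (f'' (x + t • h) h h) t := by
    intro t ht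
    have e : HasDerivAt (fun t : ℝ => f' (x + t • h)) (f'' (x + t • h) h) t :=
      (hder2 _ (hmem t ht)).comp_hasDerivAt t (hline t)
    exact (ContinuousLinearMap.apply ℝ ℝ h).hasFDerivAt.comp_hasDerivAt t e
  have key := taylor_lower (fun t => f (x + t • h)) (fun t => f' (x + t • h) h)
    (fun t => f'' (x + t • h) h h) (H * ‖h‖ ^ (2 + ν)) ν hν
    (fun t ht => (hder1 _ (hmem t ht)).comp_hasDerivAt t (hline t))
    hd2
    (fun t ht => by
      have b : ‖(f'' (x + t • h) - f'' x) h h‖ ≤ H * (t ^ ν * ‖h‖ ^ ν) * ‖h‖ * ‖h‖ := by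
        refine ((f'' (x + t • h) - f'' x).le_opNorm₂ h h).trans ?_
        have := hHolder _ (hmem t ht) x hx
        rw [add_sub_cancel_left, norm_smul, Real.norm_of_nonneg ht.1,
          Real.mul_rpow ht.1 (norm_nonneg _)] at this
        gcongr
      have b' := (abs_le.1 b).1
      simp only [sub_apply] at b'
      simp only [zero_smul, add_zero]
      rw [hpow]
      linarith)
    γ ⟨hγ0.le, hγ1⟩
  simp only [zero_smul, add_zero] at key
  have hc : f (x + γ • h) ≤ (1 - γ) * f x + γ * f y := by
    have := hconv.2 hx hy (sub_nonneg.2 hγ1) hγ0.le (by ring)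
    rwa [show (1 - γ) • x + γ • y = x + γ • h by rw [hh]; module] at this
  have hDpow : ‖h‖ ^ (2 + ν) ≤ D ^ (2 + ν) :=
    Real.rpow_le_rpow (norm_nonneg _) hDh (by linarith)
  have hγpow : γ ^ (2 + ν) = γ * γ ^ (1 + ν) := by
    rw [show 2 + ν = 1 + (1 + ν) by ring, Real.rpow_add hγ0, Real.rpow_one]
  have herr : H * ‖h‖ ^ (2 + ν) * γ ^ (2 + ν) / ((1 + ν) * (2 + ν))
      ≤ γ * (H * D ^ (2 + ν) / ((1 + ν) * (2 + ν)) * γ ^ (1 + ν)) := by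
    have : H * ‖h‖ ^ (2 + ν) * γ ^ (2 + ν) / ((1 + ν) * (2 + ν))
      ≤ H * D ^ (2 + ν) * γ ^ (2 + ν) / ((1 + ν) * (2 + ν)) := by gcongr
    refine this.trans_eq ?_
    rw [hγpow]
    ring
  refine le_of_mul_le_mul_left ?_ hγ0
  linarith


/-- upper-estimate property (17) of the Quadratic Estimating
Functions. `E` models `ℝⁿ` with an arbitrary norm; the gradient and Hessian of
`f` are the functional `f' x` and the bilinear form `f'' x`. `s = dom ψ` has
diameter bounded by `D`, `F = f + ψ`. For arbitrary test points `x_i ∈ dom ψ`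
and positive coefficients `a_{i+1}` with partial sums `A_k` and contraction
coefficients `γ_i = a_{i+1}/A_{i+1}`, the Quadratic Estimating Functions `Q_k`
satisfy `A_k F(x) ≥ Q_k(x) − C_k/2` on `dom ψ`. -/
theorem stmt_10 {E : Type*} [NormedAddCommGroup E] [NormedSpace ℝ E]
    (s : Set E) (hs : Convex ℝ s) (ψ : E → ℝ) (hψ : ConvexOn ℝ s ψ)
    (D : ℝ) (hD : ∀ x ∈ s, ∀ y ∈ s, ‖x - y‖ ≤ D)
    (f : E → ℝ) (f' : E → E →L[ℝ] ℝ) (f'' : E → E →L[ℝ] E →L[ℝ] ℝ)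
    (hconv : ConvexOn ℝ s f)
    (hder1 : ∀ x ∈ s, HasFDerivAt f (f' x) x)
    (hder2 : ∀ x ∈ s, HasFDerivAt f' (f'' x) x)
    (hcont : ContinuousOn f'' s)
    (ν Hν : ℝ) (hν : ν ∈ Set.Icc (0 : ℝ) 1) (hH : 0 ≤ Hν)
    (hHolder : ∀ x ∈ s, ∀ y ∈ s, ‖f'' x - f'' y‖ ≤ Hν * ‖x - y‖ ^ ν)
    (a : ℕ → ℝ) (ha : ∀ i, 0 < a (i + 1))
    (A : ℕ → ℝ) (hA : ∀ k, A k = ∑ i ∈ Finset.Icc 1 k, a i)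
    (γ : ℕ → ℝ) (hγ : ∀ i, γ i = a (i + 1) / A (i + 1))
    (x : ℕ → E) (hx : ∀ i, x i ∈ s)
    (F : E → ℝ) (hF : ∀ y, F y = f y + ψ y)
    (Q : ℕ → E → ℝ)
    (hQ : ∀ k y, Q k y = ∑ i ∈ Finset.range k,
        a (i + 1) * (f (x i) + f' (x i) (y - x i)
          + γ i / 2 * f'' (x i) (y - x i) (y - x i) + ψ y))
    (C : ℕ → ℝ)
    (hC : ∀ k, C k = 2 * Hν * D ^ (2 + ν) / ((1 + ν) * (2 + ν))
        * ∑ i ∈ Finset.range k, a (i + 1) * γ i ^ (1 + ν)) :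
    ∀ k, ∀ y ∈ s, A k * F y ≥ Q k y - C k / 2 := by

  intro k y hy
  have hA' : ∀ k, A k = ∑ i ∈ Finset.range k, a (i + 1) := by
    intro k
    rw [hA, Finset.range_eq_Ico, Finset.sum_Ico_add' a 0 k 1]
    rfl
  rw [ge_iff_le, sub_le_iff_le_add, hQ, hC, hA', hF, Finset.sum_mul, Finset.mul_sum,
    Finset.sum_div, ← Finset.sum_add_distrib]
  refine Finset.sum_le_sum fun i _ => ?_
  have hApos : 0 < A (i + 1) := by
    rw [hA']
    exact Finset.sum_pos (fun j _ => ha j) (by simp)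
  have hle : a (i + 1) ≤ A (i + 1) := by
    rw [hA', Finset.sum_range_succ]
    exact le_add_of_nonneg_left (Finset.sum_nonneg fun j _ => (ha j).le)
  have key := contracted_lower s D hD f f' f'' hconv hder1 hder2 ν Hν hν.1 hH hHolder
    (x i) y (hx i) hy (γ i) (by rw [hγ]; exact div_pos (ha i) hApos)
    (by rw [hγ]; exact (div_le_one hApos).2 hle)
  have := mul_le_mul_of_nonneg_left key (ha i).le
  ring_nf at this ⊢
  linarith
end

section
/- Consider the Aggregating Newton Method: x₀ ∈ dom ψ, A₀ := 0, Q₀ ≡ 0; at step k pick a_{k+1} > 0, set A_{k+1} := A_k + a_{k+1}, γ_k := a_{k+1}/A_{k+1}, Q_{k+1}(x) := Q_k(x) + a_{k+1}[f(x_k) + ⟨∇f(x_k), x − x_k⟩ + (γ_k/2)⟨∇²f(x_k)(x − x_k), x − x_k⟩ + ψ(x)], v_{k+1} ∈ Argmin_x Q_{k+1}(x), x_{k+1} := x_k + γ_k(v_{k+1} − x_k). Then for every k ≥ 0, Q_k* := min_x Q_k(x) ≥ A_k F(x_k) − C_k/2, where C_k := (2 H_ν D^{2+ν}/((1+ν)(2+ν)))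 Σ_{i=0}^{k−1} a_{i+1} γ_i^{1+ν}. Consequently, for the choice A_k := k³, F(x_k) − F* ≤ C_k/A_k = O(H_ν D^{2+ν}/k^{1+ν}) for all k ≥ 1. -/
/-!
The proof rests on one estimate, the second-order Taylor expansion along a segment with a
Hölder continuous Hessian (`taylor_segment`): for `x, y ∈ s`, `h = y - x` and `t ∈ [0, 1]`,
`|f (x + t h) - f x - t f'(x) h - (t² / 2) f''(x) h h| ≤ Hν D^(2+ν) t^(2+ν) / ((1+ν)(2+ν))`.
It is used at `t = γ k` in two ways.

* Lower bound on the estimating functions. If `Q k ≥ A k F(x k) - C k / 2` on `s`, evaluating at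
  the minimizer `v (k+1)` of `Q (k+1)` and using `a (k+1) = A (k+1) γ k`, the smooth terms assemble
  into `A (k+1)` times the quadratic model of `f` at `x k`, taken at `x (k+1)`, while convexity of
  `ψ` handles the composite terms. The Taylor error is `A (k+1) γ^(2+ν) = a (k+1) γ^(1+ν)` times
  the constant, which is the increment of `C / 2`.
* Upper bound on the estimating functions. Convexity gives
  `f (x + γ h) ≤ (1 - γ) f x + γ f y`; combined with the Taylor lower bound and divided by `γ`,
  the damped quadratic model at `x i` exceeds `f y` by at most a constant times `γ^(1+ν)`.
  Summing, `Q k y ≤ A k F y + C k / 2`.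

The two bounds together give `F (x k) - F y ≤ C k / A k`. For `A k = k³` one has
`a (i+1) ≤ 3 (i+1)²` and `γ i ≤ 3 / (i+1)`, so each summand of `C k` is at most `27 k^(1-ν)`.
-/

/-- Second-order Taylor estimate along a segment for a function with `ν`-Hölder Hessian, obtained
by bounding first the derivative of the remainder and then the remainder itself. -/
theorem taylor_segment {E : Type*} [NormedAddCommGroup E] [NormedSpace ℝ E]
    {s : Set E} (hs : Convex ℝ s)
    {D : ℝ} (hD : ∀ x ∈ s, ∀ y ∈ s, ‖x - y‖ ≤ D)
    {f : E → ℝ} {f' : E → E →L[ℝ] ℝ} {f'' : E → E →L[ℝ] E →L[ℝ] ℝ}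
    (hder1 : ∀ x ∈ s, HasFDerivAt f (f' x) x)
    (hder2 : ∀ x ∈ s, HasFDerivAt f' (f'' x) x)
    {ν Hν : ℝ} (hν : 0 ≤ ν) (hH : 0 ≤ Hν)
    (hHolder : ∀ x ∈ s, ∀ y ∈ s, ‖f'' x - f'' y‖ ≤ Hν * ‖x - y‖ ^ ν)
    {x y : E} (hx : x ∈ s) (hy : y ∈ s) {t : ℝ} (ht : t ∈ Set.Icc (0 : ℝ) 1) :
    |f (x + t • (y - x)) - f x - t * f' x (y - x) - t ^ 2 / 2 * f'' x (y - x) (y - x)|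
      ≤ Hν * D ^ (2 + ν) / ((1 + ν) * (2 + ν)) * t ^ (2 + ν) := by
  set h := y - x with hh
  have hmem : ∀ r ∈ Set.Icc (0 : ℝ) 1, x + r • h ∈ s := fun r hr =>
    hs.add_smul_sub_mem hx hy hr
  have hDn : ‖h‖ ≤ D := hD y hy x hx
  have hline : ∀ r : ℝ, HasDerivAt (fun r : ℝ => x + r • h) h r := fun r => by
    simpa using ((hasDerivAt_id r).smul_const h).const_add x
  have hd1 : ∀ r ∈ Set.Icc (0 : ℝ) 1, HasDerivAt (fun r : ℝ => f (x + r • h))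
      (f' (x + r • h) h) r := fun r hr =>
    (hder1 _ (hmem r hr)).comp_hasDerivAt r (hline r)
  have hd2 : ∀ r ∈ Set.Icc (0 : ℝ) 1, HasDerivAt (fun r : ℝ => f' (x + r • h) h)
      (f'' (x + r • h) h h) r := fun r hr => by
    have := (hder2 _ (hmem r hr)).comp_hasDerivAt r (hline r)
    simpa using this.clm_apply (hasDerivAt_const r h)
  have hpow : ‖h‖ ^ (2 + ν) = ‖h‖ ^ ν * ‖h‖ * ‖h‖ := by
    rw [Real.rpow_add_of_nonneg (norm_nonneg _) (by norm_num) hν]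
    norm_num
    ring
  set M := Hν * ‖h‖ ^ (2 + ν) with hM
  have e1 : ∀ r ∈ Set.Icc (0 : ℝ) 1, HasDerivAt (fun r : ℝ => f' (x + r • h) h - f' x h
      - r * f'' x h h) (f'' (x + r • h) h h - f'' x h h) r := fun r hr => by
    exact (((hd2 r hr).sub_const (f' x h)).sub
      ((hasDerivAt_id r).mul_const (f'' x h h))).congr_deriv (by simp)
  have e0 : ∀ r ∈ Set.Icc (0 : ℝ) 1, HasDerivAt (fun r : ℝ => f (x + r • h) - f x - r * f' x h
      - r ^ 2 / 2 * f'' x h h) (f' (x + r • h) h - f' x h - r * f'' x h h) r := fun r hr => by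
    have h2 : HasDerivAt (fun r : ℝ => r ^ 2 / 2 * f'' x h h) (r * f'' x h h) r := by
      exact (((hasDerivAt_id r).pow 2).div_const 2).mul_const (f'' x h h) |>.congr_deriv
        (by simp)
    exact ((((hd1 r hr).sub_const (f x)).sub
      ((hasDerivAt_id r).mul_const (f' x h))).sub h2).congr_deriv (by simp)
  have step1 : ∀ r ∈ Set.Icc (0 : ℝ) 1, ‖f' (x + r • h) h - f' x h - r * f'' x h h‖
      ≤ M / (1 + ν) * r ^ (1 + ν) := by
    refine fun r hr => image_norm_le_of_norm_deriv_right_le_deriv_boundary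
      (f := fun r : ℝ => f' (x + r • h) h - f' x h - r * f'' x h h)
      (f' := fun r => f'' (x + r • h) h h - f'' x h h)
      (B := fun r => M / (1 + ν) * r ^ (1 + ν)) (B' := fun r => M * r ^ ν)
      (fun q hq => (e1 q hq).continuousAt.continuousWithinAt)
      (fun q hq => (e1 q ⟨hq.1, hq.2.le⟩).hasDerivWithinAt) ?_ ?_ ?_ hr
    · simp [Real.zero_rpow (by linarith : 1 + ν ≠ 0)]
    · intro r
      refine ((Real.hasDerivAt_rpow_const (x := r) (p := 1 + ν)
        (Or.inr (by linarith))).const_mul (M / (1 + ν))).congr_deriv ?_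
      have : 1 + ν ≠ 0 := by linarith
      rw [add_sub_cancel_left]
      field_simp
    · intro r hr
      have hb := hHolder _ (hmem r ⟨hr.1, hr.2.le⟩) x hx
      rw [add_sub_cancel_left, norm_smul, Real.norm_of_nonneg hr.1,
        Real.mul_rpow hr.1 (norm_nonneg _)] at hb
      calc ‖f'' (x + r • h) h h - f'' x h h‖ = ‖(f'' (x + r • h) - f'' x) h h‖ := by simp
        _ ≤ ‖f'' (x + r • h) - f'' x‖ * ‖h‖ * ‖h‖ := ContinuousLinearMap.le_opNorm₂ _ _ _
        _ ≤ Hν * (r ^ ν * ‖h‖ ^ ν) * ‖h‖ * ‖h‖ := by gcongr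
        _ = M * r ^ ν := by rw [hM, hpow]; ring
  have step2 : ‖f (x + t • h) - f x - t * f' x h - t ^ 2 / 2 * f'' x h h‖
      ≤ M / ((1 + ν) * (2 + ν)) * t ^ (2 + ν) := by
    refine image_norm_le_of_norm_deriv_right_le_deriv_boundary
      (f := fun r : ℝ => f (x + r • h) - f x - r * f' x h - r ^ 2 / 2 * f'' x h h)
      (B := fun r => M / ((1 + ν) * (2 + ν)) * r ^ (2 + ν))
      (B' := fun r => M / (1 + ν) * r ^ (1 + ν))
      (fun r hr => (e0 r hr).continuousAt.continuousWithinAt)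
      (fun r hr => (e0 r ⟨hr.1, hr.2.le⟩).hasDerivWithinAt) ?_ ?_
      (fun r hr => step1 r ⟨hr.1, hr.2.le⟩) ht
    · simp [Real.zero_rpow (by linarith : 2 + ν ≠ 0)]
    · intro r
      refine ((Real.hasDerivAt_rpow_const (x := r) (p := 2 + ν)
        (Or.inr (by linarith))).const_mul (M / ((1 + ν) * (2 + ν)))).congr_deriv ?_
      have h1 : 1 + ν ≠ 0 := by linarith
      have h2 : 2 + ν ≠ 0 := by linarith
      rw [show 2 + ν - 1 = 1 + ν by ring]
      field_simp
  rw [Real.norm_eq_abs] at step2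
  refine step2.trans ?_
  have := Real.rpow_nonneg ht.1 (2 + ν)
  have : ‖h‖ ^ (2 + ν) ≤ D ^ (2 + ν) :=
    Real.rpow_le_rpow (norm_nonneg _) hDn (by linarith)
  rw [hM]
  gcongr

/-- One summand of `C k` for the cubic schedule: `b = a (i+1)`, `g = γ i`, `m = i + 1`. -/
theorem cubic_term_bound {ν b g m k : ℝ} (hν : ν ∈ Set.Icc (0 : ℝ) 1) (hb : b ≤ 3 * m ^ 2)
    (hb0 : 0 ≤ b) (hg : g = b / m ^ 3) (hm : 0 < m) (hmk : m ≤ k) :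
    b * g ^ (1 + ν) ≤ 27 * k ^ (1 - ν) := by
  obtain ⟨h0, h1⟩ := hν
  have hg0 : 0 ≤ g := by rw [hg]; positivity
  have hg3 : g ≤ 3 / m := by
    rw [hg, div_le_div_iff₀ (by positivity) hm]
    nlinarith
  have h3 : (3 : ℝ) ^ (1 + ν) ≤ 9 := by
    calc (3 : ℝ) ^ (1 + ν) ≤ 3 ^ (2 : ℝ) :=
          Real.rpow_le_rpow_of_exponent_le (by norm_num) (by linarith)
      _ = 9 := by norm_num
  have hmm : m ^ (2 : ℕ) / m ^ (1 + ν) = m ^ (1 - ν) := by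
    rw [← Real.rpow_natCast, ← Real.rpow_sub hm]
    congr 1
    push_cast
    ring
  calc b * g ^ (1 + ν) ≤ 3 * m ^ 2 * (3 / m) ^ (1 + ν) := by gcongr
    _ = 3 * 3 ^ (1 + ν) * (m ^ 2 / m ^ (1 + ν)) := by
        rw [Real.div_rpow (by norm_num) hm.le]; ring
    _ = 3 * 3 ^ (1 + ν) * m ^ (1 - ν) := by rw [hmm]
    _ ≤ 3 * 9 * k ^ (1 - ν) := by gcongr
    _ = 27 * k ^ (1 - ν) := by norm_num


/-- Theorem 4: convergence of the Aggregating Newton Method.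
`E` models `ℝⁿ` with an arbitrary norm; setup as in Statement 10, with the
iterates of the Aggregating Newton Method: `v_{k+1}` minimizes the Quadratic
Estimating Function `Q_{k+1}` over `dom ψ` and
`x_{k+1} = x_k + γ_k (v_{k+1} − x_k)`. The first conclusion is the relation
`Q_k* ≥ A_k F(x_k) − C_k/2`; the second is the rate `F(x_k) − F* ≤ C_k/A_k`
for `A_k = k³`, together with the `O(H_ν D^{2+ν}/k^{1+ν})` bound. -/
theorem stmt_11 {E : Type*} [NormedAddCommGroup E] [NormedSpace ℝ E]
    (s : Set E) (hs : Convex ℝ s) (ψ : E → ℝ) (hψ : ConvexOn ℝ s ψ)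
    (D : ℝ) (hD : ∀ x ∈ s, ∀ y ∈ s, ‖x - y‖ ≤ D)
    (f : E → ℝ) (f' : E → E →L[ℝ] ℝ) (f'' : E → E →L[ℝ] E →L[ℝ] ℝ)
    (hconv : ConvexOn ℝ s f)
    (hder1 : ∀ x ∈ s, HasFDerivAt f (f' x) x)
    (hder2 : ∀ x ∈ s, HasFDerivAt f' (f'' x) x)
    (hcont : ContinuousOn f'' s)
    (ν Hν : ℝ) (hν : ν ∈ Set.Icc (0 : ℝ) 1) (hH : 0 ≤ Hν)
    (hHolder : ∀ x ∈ s, ∀ y ∈ s, ‖f'' x - f'' y‖ ≤ Hν * ‖x - y‖ ^ ν)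
    (a : ℕ → ℝ) (ha : ∀ i, 0 < a (i + 1))
    (A : ℕ → ℝ) (hA : ∀ k, A k = ∑ i ∈ Finset.Icc 1 k, a i)
    (γ : ℕ → ℝ) (hγ : ∀ i, γ i = a (i + 1) / A (i + 1))
    (x v : ℕ → E) (hx0 : x 0 ∈ s)
    (F : E → ℝ) (hF : ∀ y, F y = f y + ψ y)
    (Fstar : ℝ) (hFstar : Fstar = sInf (F '' s))
    (Q : ℕ → E → ℝ)
    (hQ : ∀ k y, Q k y = ∑ i ∈ Finset.range k,
        a (i + 1) * (f (x i) + f' (x i) (y - x i)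
          + γ i / 2 * f'' (x i) (y - x i) (y - x i) + ψ y))
    (hv : ∀ k, v (k + 1) ∈ s ∧ ∀ y ∈ s, Q (k + 1) (v (k + 1)) ≤ Q (k + 1) y)
    (hupd : ∀ k, x (k + 1) = x k + γ k • (v (k + 1) - x k))
    (C : ℕ → ℝ)
    (hC : ∀ k, C k = 2 * Hν * D ^ (2 + ν) / ((1 + ν) * (2 + ν))
        * ∑ i ∈ Finset.range k, a (i + 1) * γ i ^ (1 + ν)) :
    (∀ k, sInf (Q k '' s) ≥ A k * F (x k) - C k / 2) ∧
    ((∀ k, A k = (k : ℝ) ^ 3) →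
      (∀ k, 1 ≤ k → F (x k) - Fstar ≤ C k / A k) ∧
      ∃ c : ℝ, 0 < c ∧ ∀ k, 1 ≤ k →
        C k / A k ≤ c * Hν * D ^ (2 + ν) / (k : ℝ) ^ (1 + ν)) := by
  obtain ⟨hν0, hν1⟩ := hν
  have hA0 : A 0 = 0 := by simp [hA]
  have hAs : ∀ k, A (k + 1) = A k + a (k + 1) := fun k => by
    rw [hA, hA, Finset.sum_Icc_succ_top (by omega)]
  have hAn : ∀ k, 0 ≤ A k := fun k => by
    induction k with
    | zero => exact hA0.ge
    | succ k ih => rw [hAs]; linarith [ha k]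
  have hAp : ∀ k, 0 < A (k + 1) := fun k => by rw [hAs]; linarith [ha k, hAn k]
  have hγp : ∀ k, 0 < γ k := fun k => by rw [hγ]; exact div_pos (ha k) (hAp k)
  have hγ1 : ∀ k, γ k ≤ 1 := fun k => by
    rw [hγ, div_le_one (hAp k), hAs]; linarith [hAn k]
  have haγ : ∀ k, a (k + 1) = A (k + 1) * γ k := fun k => by
    rw [hγ]; field_simp [(hAp k).ne']
  have hxs : ∀ k, x k ∈ s := fun k => by
    induction k with
    | zero => exact hx0
    | succ k ih =>
      rw [hupd]
      exact hs.add_smul_sub_mem ih (hv k).1 ⟨(hγp k).le, hγ1 k⟩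
  have hD0 : 0 ≤ D := (norm_nonneg _).trans (hD _ hx0 _ hx0)
  set K := Hν * D ^ (2 + ν) / ((1 + ν) * (2 + ν)) with hK
  have hK0 : 0 ≤ K := by positivity
  have hpow : ∀ k, γ k ^ (2 + ν) = γ k * γ k ^ (1 + ν) := fun k => by
    rw [show 2 + ν = 1 + (1 + ν) by ring, Real.rpow_add (hγp k), Real.rpow_one]
  have hT : ∀ k, ∀ y ∈ s, |f (x k + γ k • (y - x k)) - f (x k) - γ k * f' (x k) (y - x k)
      - γ k ^ 2 / 2 * f'' (x k) (y - x k) (y - x k)| ≤ K * (γ k * γ k ^ (1 + ν)) :=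
    fun k y hy => by
      rw [← hpow]
      exact taylor_segment hs hD hder1 hder2 hν0 hH hHolder (hxs k) hy ⟨(hγp k).le, hγ1 k⟩
  have hC2 : ∀ k, C k / 2 = K * ∑ i ∈ Finset.range k, a (i + 1) * γ i ^ (1 + ν) := fun k => by
    rw [hC, hK]; ring
  have hCs : ∀ k, C (k + 1) / 2 = C k / 2 + K * (a (k + 1) * γ k ^ (1 + ν)) := fun k => by
    rw [hC2, hC2, Finset.sum_range_succ]; ring
  have hcomb : ∀ k y, x k + γ k • (y - x k) = (1 - γ k) • x k + γ k • y := fun k y => by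
    module
  have lower : ∀ k, ∀ y ∈ s, A k * F (x k) - C k / 2 ≤ Q k y := by
    intro k
    induction k with
    | zero => intro y _; rw [hQ, hC, hA0]; simp
    | succ k ih =>
      intro y hy
      refine le_trans ?_ ((hv k).2 y hy)
      have hvs := (hv k).1
      have h1 := ih _ hvs
      have h2 := (abs_le.1 (hT k _ hvs)).2
      have h3 := hψ.2 (hxs k) hvs (by linarith [hγ1 k] : 0 ≤ 1 - γ k) (hγp k).le (by ring)
      rw [← hcomb, ← hupd] at h3
      rw [← hupd] at h2
      simp only [smul_eq_mul] at h3
      have hQs : Q (k + 1) (v (k + 1)) = Q k (v (k + 1)) + a (k + 1) *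
          (f (x k) + f' (x k) (v (k + 1) - x k)
          + γ k / 2 * f'' (x k) (v (k + 1) - x k) (v (k + 1) - x k) + ψ (v (k + 1))) := by
        rw [hQ, hQ, Finset.sum_range_succ]
      have hAk : A k = A (k + 1) * (1 - γ k) := by linarith [hAs k, haγ k]
      have h4 := mul_le_mul_of_nonneg_left (add_le_add h2 h3) (hAp k).le
      rw [hQs, hCs, haγ k]
      rw [hF, hAk] at h1
      rw [hF]
      linear_combination h4 + h1
  refine ⟨fun k => ?_, fun hcube => ⟨fun k hk => ?_, ?_⟩⟩
  · refine le_csInf ⟨_, Set.mem_image_of_mem _ hx0⟩ ?_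
    rintro _ ⟨y, hy, rfl⟩
    exact lower k y hy
  · have hApk : 0 < A k := by
      obtain ⟨j, rfl⟩ := Nat.exists_eq_succ_of_ne_zero (by omega : k ≠ 0)
      exact hAp j
    have upper : ∀ k, ∀ y ∈ s, Q k y ≤ A k * F y + C k / 2 := by
      intro k y hy
      induction k with
      | zero => rw [hQ, hC, hA0]; simp
      | succ k ih =>
        have h2 := (abs_le.1 (hT k y hy)).1
        have h3 := hconv.2 (hxs k) hy (by linarith [hγ1 k] : 0 ≤ 1 - γ k) (hγp k).le (by ring)
        rw [← hcomb] at h3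
        simp only [smul_eq_mul] at h3
        -- The Taylor lower bound and convexity carry a common factor `γ k > 0`.
        have h5 : f (x k) + f' (x k) (y - x k) + γ k / 2 * f'' (x k) (y - x k) (y - x k)
            ≤ f y + K * γ k ^ (1 + ν) := by
          refine le_of_mul_le_mul_left ?_ (hγp k)
          linear_combination h2 + h3
        have h6 := mul_le_mul_of_nonneg_left h5 (ha k).le
        have hQs : Q (k + 1) y = Q k y + a (k + 1) * (f (x k) + f' (x k) (y - x k)
            + γ k / 2 * f'' (x k) (y - x k) (y - x k) + ψ y) := by
          rw [hQ, hQ, Finset.sum_range_succ]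
        rw [hQs, hCs, hAs]
        rw [hF] at ih ⊢
        linear_combination ih + h6
    have hle : F (x k) - C k / A k ≤ Fstar := by
      rw [hFstar]
      refine le_csInf ⟨_, Set.mem_image_of_mem _ hx0⟩ ?_
      rintro _ ⟨y, hy, rfl⟩
      have h1 := (lower k y hy).trans (upper k y hy)
      have h2 : F (x k) - F y ≤ C k / A k := by
        rw [le_div_iff₀ hApk]
        linarith
      linarith
    linarith
  · refine ⟨27, by norm_num, fun k hk => ?_⟩
    have hk0 : (0 : ℝ) < k := by exact_mod_cast hk
    have hsum : ∑ i ∈ Finset.range k, a (i + 1) * γ i ^ (1 + ν)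
        ≤ k * (27 * (k : ℝ) ^ (1 - ν)) := by
      have := Finset.sum_le_card_nsmul (Finset.range k)
        (fun i => a (i + 1) * γ i ^ (1 + ν)) (27 * (k : ℝ) ^ (1 - ν)) (fun i hi => ?_)
      · simpa using this
      have hik : (i : ℝ) + 1 ≤ k := by exact_mod_cast Finset.mem_range.1 hi
      have hi0 : (0 : ℝ) ≤ i := i.cast_nonneg
      refine cubic_term_bound ⟨hν0, hν1⟩ (m := (i : ℝ) + 1) ?_ (ha i).le ?_ (by positivity) hik
      · have := hAs i
        rw [hcube, hcube] at this
        push_cast at this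
        nlinarith
      · rw [hγ, hcube]
        push_cast
        rfl
    have hKle : 2 * K ≤ Hν * D ^ (2 + ν) := by
      rw [hK, ← mul_div_assoc, div_le_iff₀ (by positivity)]
      have : 0 ≤ Hν * D ^ (2 + ν) := by positivity
      nlinarith [mul_nonneg this hν0, mul_nonneg this (mul_nonneg hν0 hν0)]
    have hkp : (k : ℝ) * (k : ℝ) ^ (1 - ν) * (k : ℝ) ^ (1 + ν) = (k : ℝ) ^ 3 := by
      rw [mul_assoc, ← Real.rpow_add hk0, show 1 - ν + (1 + ν) = (2 : ℕ) by push_cast; ring,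
        Real.rpow_natCast]
      ring
    have hCk : C k ≤ Hν * D ^ (2 + ν) * (k * (27 * (k : ℝ) ^ (1 - ν))) := by
      have h1 : C k = 2 * K * ∑ i ∈ Finset.range k, a (i + 1) * γ i ^ (1 + ν) := by
        linarith [hC2 k]
      rw [h1]
      exact mul_le_mul hKle hsum
        (Finset.sum_nonneg fun i _ => mul_nonneg (ha i).le (Real.rpow_nonneg (hγp i).le _))
        (by positivity)
    rw [hcube, div_le_div_iff₀ (by positivity) (by positivity), ← hkp]
    have := mul_le_mul_of_nonneg_right hCk (by positivity : 0 ≤ (k : ℝ) ^ (1 + ν))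
    linarith
end

section
/- Consider inexact Contracting-Domain Newton iterations in Euclidean norm: given x₀ ∈ dom ψ, vectors g_k ∈ ℝⁿ, symmetric matrices H_k, positive coefficients {a_k}, A_k := Σ_{i=1}^k a_i, γ_k := a_{k+1}/A_{k+1}, and points x_{k+1} = x_k + γ_k(v_{k+1} − x_k) with v_{k+1} ∈ dom ψ satisfying ⟨g_k + H_k(x_{k+1} − x_k), x − v_{k+1}⟩ + ψ(x) ≥ ψ(v_{k+1}) for all x ∈ dom ψ. Then for all k ≥ 1, F(x_k) − F* ≤ B_k/A_k, where B_k := (L₂D³/2) Σ_{i=0}^{k−1} a_{i+1}³/A_{i+1}² + D Σ_{i=0}^{k−1} a_{i+1} ‖∇f(x_i) − g_i‖ + D² Σ_{i=0}^{k−1} (a_{i+1}²/A_{i+1}) ‖∇²f(x_i) − H_i‖. -/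
/-!
Fix a comparison point `y ∈ s`. The estimate `A k * F (x k) ≤ A k * F y + B k` follows by induction
on `k`. Since `x (k + 1)` is the convex combination of `x k` and `v (k + 1)` with weight
`γ = a (k + 1) / A (k + 1)`, the gradient inequality at `x (k + 1)` towards both `y` and `x k`,
convexity of `ψ`, and the stationarity condition bound
`F (x (k + 1)) - (γ F y + (1 - γ) F (x k))` by
`γ ⟪f' (x (k + 1)) - g k - H k (x (k + 1) - x k), v (k + 1) - y⟫` (`step_bound`).
The left vector of this inner product is split into the second-order Taylor remainder of `f'`,
at most `L₂ / 2 * ‖x (k + 1) - x k‖ ^ 2` (`taylor_gradient`), and the errors in `g k` and `H k`;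
all distances are at most `D`, and `‖x (k + 1) - x k‖ ≤ γ D`.

As the bound holds for every `y ∈ s`, it passes to the infimum. It also shows that `F` is bounded
below on `s`, so the real-valued `sInf` is the true infimum.
-/


open scoped RealInnerProductSpace

theorem gradient_inequality {E : Type*} [NormedAddCommGroup E] [InnerProductSpace ℝ E]
    [CompleteSpace E] {s : Set E} {f : E → ℝ} (hf : ConvexOn ℝ s f) {z y p : E}
    (hz : z ∈ s) (hy : y ∈ s) (hp : HasGradientAt f p z) :
    f z + ⟪p, y - z⟫ ≤ f y := by
  have hc := hf.comp_affineMap (AffineMap.lineMap z y : ℝ →ᵃ[ℝ] E)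
  have hd : HasDerivAt (f ∘ (AffineMap.lineMap z y : ℝ → E)) ⟪p, y - z⟫ 0 := by
    have h1 : HasDerivAt (AffineMap.lineMap z y : ℝ → E) (y - z) 0 :=
      AffineMap.hasDerivAt_lineMap
    have h2 := (hasGradientAt_iff_hasFDerivAt.mp hp)
    rw [← AffineMap.lineMap_apply_zero (k := ℝ) z y] at h2
    simpa using h2.comp_hasDerivAt (0 : ℝ) h1
  have h := hc.le_slope_of_hasDerivAt (x := 0) (y := 1) (by simpa using hz) (by simpa using hy)
    one_pos hd
  simp [slope_def_field] at h
  linarith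

/-- Second-order Taylor bound for a map with Lipschitz derivative. The constant `L / 2` comes from comparing, along the segment from `p` to `q` with `d = q - p`, the derivative
`f'' (p + t d) d - f'' p d` of the remainder with that of `L * ‖d‖ ^ 2 * t ^ 2 / 2`. -/
theorem taylor_gradient {E : Type*} [NormedAddCommGroup E] [NormedSpace ℝ E]
    {s : Set E} (hs : Convex ℝ s) {f' : E → E} {f'' : E → E →L[ℝ] E}
    (hder : ∀ x ∈ s, HasFDerivAt f' (f'' x) x) {L : ℝ}
    (hLip : ∀ x ∈ s, ∀ y ∈ s, ‖f'' x - f'' y‖ ≤ L * ‖x - y‖) {p q : E}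
    (hp : p ∈ s) (hq : q ∈ s) :
    ‖f' q - f' p - f'' p (q - p)‖ ≤ L / 2 * ‖q - p‖ ^ 2 := by
  have hmem : ∀ t ∈ Set.Icc (0 : ℝ) 1, AffineMap.lineMap p q t ∈ s := fun t ht =>
    hs.lineMap_mem hp hq ht
  have hd : ∀ t ∈ Set.Icc (0 : ℝ) 1,
      HasDerivAt (fun t : ℝ => f' (AffineMap.lineMap p q t) - f' p - t • f'' p (q - p))
        (f'' (AffineMap.lineMap p q t) (q - p) - f'' p (q - p)) t := by
    intro t ht
    have h1 := (hder _ (hmem t ht)).comp_hasDerivAt t AffineMap.hasDerivAt_lineMap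
    have h2 := (hasDerivAt_id t).smul_const (f'' p (q - p))
    exact ((h1.sub_const (f' p)).sub h2).congr_deriv (by simp)
  have hB : ∀ t : ℝ, HasDerivAt (fun t : ℝ => L / 2 * ‖q - p‖ ^ 2 * t ^ 2)
      (L * ‖q - p‖ ^ 2 * t) t := by
    intro t
    have h := ((hasDerivAt_id t).pow 2).const_mul (L / 2 * ‖q - p‖ ^ 2)
    refine h.congr_deriv ?_
    simp
    ring
  have h := image_norm_le_of_norm_deriv_right_le_deriv_boundary (a := 0) (b := 1)
    (fun t ht => (hd t ht).continuousAt.continuousWithinAt)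
    (fun t ht => (hd t ⟨ht.1, ht.2.le⟩).hasDerivWithinAt) (by simp) hB ?_
    (Set.right_mem_Icc.mpr zero_le_one)
  · simpa using h
  · intro t ht
    have ht' : t ∈ Set.Icc (0 : ℝ) 1 := ⟨ht.1, ht.2.le⟩
    rw [← sub_apply]
    refine (ContinuousLinearMap.le_opNorm _ _).trans ?_
    have h1 := hLip _ (hmem t ht') _ hp
    have h2 : AffineMap.lineMap p q t - p = t • (q - p) := by
      simp [AffineMap.lineMap_apply]
    rw [h2, norm_smul, Real.norm_of_nonneg ht.1] at h1
    calc _ ≤ L * (t * ‖q - p‖) * ‖q - p‖ := by gcongr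
      _ = _ := by ring

/-- One iteration, compared with an arbitrary `y ∈ s`: here `p`, `w`, `q` are the current point,
the solution of the subproblem, and the next point, and `r` is the step size. -/
theorem step_bound {E : Type*} [NormedAddCommGroup E] [InnerProductSpace ℝ E] [CompleteSpace E]
    {s : Set E} (hs : Convex ℝ s) {ψ f : E → ℝ} (hψ : ConvexOn ℝ s ψ)
    {D : ℝ} (hD : ∀ x ∈ s, ∀ y ∈ s, ‖x - y‖ ≤ D)
    {f' : E → E} {f'' : E → E →L[ℝ] E} (hconv : ConvexOn ℝ s f)
    (hder1 : ∀ x ∈ s, HasGradientAt f (f' x) x)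
    (hder2 : ∀ x ∈ s, HasFDerivAt f' (f'' x) x)
    {L : ℝ} (hL : 0 ≤ L) (hLip : ∀ x ∈ s, ∀ y ∈ s, ‖f'' x - f'' y‖ ≤ L * ‖x - y‖)
    {g : E} {H : E →L[ℝ] E} {p w q y : E} (hp : p ∈ s) (hw : w ∈ s) (hy : y ∈ s)
    {r : ℝ} (hr0 : 0 ≤ r) (hr1 : r ≤ 1) (hq : q = p + r • (w - p))
    (hstat : ⟪g + H (q - p), y - w⟫ + ψ y ≥ ψ w) :
    f q + ψ q ≤ r * (f y + ψ y) + (1 - r) * (f p + ψ p)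
      + (L * D ^ 3 / 2 * r ^ 3 + D * (r * ‖f' p - g‖) + D ^ 2 * (r ^ 2 * ‖f'' p - H‖)) := by
  have hq' : q = (1 - r) • p + r • w := by rw [hq]; module
  have hqs : q ∈ s := by
    rw [hq']; exact hs hp hw (by linarith) hr0 (by ring)
  have hD0 : 0 ≤ D := (norm_nonneg _).trans (hD p hp w hw)
  have hqp : ‖q - p‖ ≤ r * D := by
    rw [hq, add_sub_cancel_left, norm_smul, Real.norm_of_nonneg hr0]
    exact mul_le_mul_of_nonneg_left (hD w hw p hp) hr0
  have hψq : ψ q ≤ (1 - r) * ψ p + r * ψ w := by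
    have := hψ.2 hp hw (by linarith : 0 ≤ 1 - r) hr0 (by ring)
    rw [← hq'] at this
    simpa using this
  have hfy := gradient_inequality hconv hqs hy (hder1 q hqs)
  have hfp := gradient_inequality hconv hqs hp (hder1 q hqs)
  have hcomb : r * ⟪f' q, y - q⟫ + (1 - r) * ⟪f' q, p - q⟫ = r * ⟪f' q, y - w⟫ := by
    rw [← real_inner_smul_right, ← real_inner_smul_right, ← real_inner_smul_right, ← inner_add_right]
    congr 1
    rw [hq]
    module
  have hvec : ‖f' q - (g + H (q - p))‖
      ≤ L / 2 * (r * D) ^ 2 + ‖f' p - g‖ + ‖f'' p - H‖ * (r * D) := by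
    have hsplit : f' q - (g + H (q - p))
        = (f' q - f' p - f'' p (q - p)) + (f' p - g) + (f'' p - H) (q - p) := by
      rw [sub_apply]; abel
    rw [hsplit]
    refine norm_add₃_le.trans ?_
    have h1 := taylor_gradient hs hder2 hLip hp hqs
    have h2 := (f'' p - H).le_opNorm (q - p)
    have h3 : L / 2 * ‖q - p‖ ^ 2 ≤ L / 2 * (r * D) ^ 2 := by gcongr
    have h4 : ‖f'' p - H‖ * ‖q - p‖ ≤ ‖f'' p - H‖ * (r * D) := by gcongr
    linarith
  have hin : ⟪f' q - (g + H (q - p)), w - y⟫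
      ≤ (L / 2 * (r * D) ^ 2 + ‖f' p - g‖ + ‖f'' p - H‖ * (r * D)) * D :=
    (real_inner_le_norm _ _).trans
      (mul_le_mul hvec (hD w hw y hy) (norm_nonneg _) ((norm_nonneg _).trans hvec))
  have hin' : ⟪f' q - (g + H (q - p)), w - y⟫ = -⟪f' q, y - w⟫ + ⟪g + H (q - p), y - w⟫ := by
    rw [inner_sub_left, ← neg_sub y w, inner_neg_right, inner_neg_right]; ring
  have key : -⟪f' q, y - w⟫ + ψ w - ψ y
      ≤ (L / 2 * (r * D) ^ 2 + ‖f' p - g‖ + ‖f'' p - H‖ * (r * D)) * D := by linarith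
  have e1 := mul_le_mul_of_nonneg_left key hr0
  have e2 := mul_le_mul_of_nonneg_left hfy hr0
  have e3 := mul_le_mul_of_nonneg_left hfp (by linarith : 0 ≤ 1 - r)
  linear_combination e1 + e2 + e3 + hψq - hcomb

/-- Lemma 3: inexact Contracting-Domain Newton iterations in
the Euclidean norm. The space is `ℝⁿ` with the standard Euclidean structure;
the gradient `∇f(x)` is the vector `f' x` (via `HasGradientAt`) and the Hessian
`∇²f(x)` is the linear operator `f'' x : E →L[ℝ] E`, whose operator norm is the
spectral norm. `g_k` and `H_k` (symmetric) replace the true gradient and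
Hessian in the stationarity condition, and the update is
`x_{k+1} = x_k + γ_k (v_{k+1} − x_k)`. -/
theorem stmt_12 {n : ℕ}
    (s : Set (EuclideanSpace ℝ (Fin n))) (hs : Convex ℝ s)
    (ψ : EuclideanSpace ℝ (Fin n) → ℝ) (hψ : ConvexOn ℝ s ψ)
    (D : ℝ) (hD : ∀ x ∈ s, ∀ y ∈ s, ‖x - y‖ ≤ D)
    (f : EuclideanSpace ℝ (Fin n) → ℝ)
    (f' : EuclideanSpace ℝ (Fin n) → EuclideanSpace ℝ (Fin n))
    (f'' : EuclideanSpace ℝ (Fin n) →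
      EuclideanSpace ℝ (Fin n) →L[ℝ] EuclideanSpace ℝ (Fin n))
    (hconv : ConvexOn ℝ s f)
    (hder1 : ∀ x ∈ s, HasGradientAt f (f' x) x)
    (hder2 : ∀ x ∈ s, HasFDerivAt f' (f'' x) x)
    (hcont : ContinuousOn f'' s)
    (L₂ : ℝ) (hL₂ : 0 ≤ L₂)
    (hLip : ∀ x ∈ s, ∀ y ∈ s, ‖f'' x - f'' y‖ ≤ L₂ * ‖x - y‖)
    (g : ℕ → EuclideanSpace ℝ (Fin n))
    (H : ℕ → EuclideanSpace ℝ (Fin n) →L[ℝ] EuclideanSpace ℝ (Fin n))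
    (hHsym : ∀ k u w, ⟪H k u, w⟫ = ⟪u, H k w⟫)
    (a : ℕ → ℝ) (ha : ∀ k, 1 ≤ k → 0 < a k)
    (A : ℕ → ℝ) (hA : ∀ k, A k = ∑ i ∈ Finset.Icc 1 k, a i)
    (γ : ℕ → ℝ) (hγ : ∀ k, γ k = a (k + 1) / A (k + 1))
    (x v : ℕ → EuclideanSpace ℝ (Fin n)) (hx0 : x 0 ∈ s) (hv : ∀ k, v (k + 1) ∈ s)
    (hstat : ∀ k, ∀ y ∈ s,
      ⟪g k + H k (x (k + 1) - x k), y - v (k + 1)⟫ + ψ y ≥ ψ (v (k + 1)))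
    (hupd : ∀ k, x (k + 1) = x k + γ k • (v (k + 1) - x k))
    (F : EuclideanSpace ℝ (Fin n) → ℝ) (hF : ∀ y, F y = f y + ψ y)
    (Fstar : ℝ) (hFstar : Fstar = sInf (F '' s))
    (B : ℕ → ℝ)
    (hB : ∀ k, B k =
        L₂ * D ^ 3 / 2 * ∑ i ∈ Finset.range k, a (i + 1) ^ 3 / A (i + 1) ^ 2
        + D * ∑ i ∈ Finset.range k, a (i + 1) * ‖f' (x i) - g i‖
        + D ^ 2 * ∑ i ∈ Finset.range k, a (i + 1) ^ 2 / A (i + 1) * ‖f'' (x i) - H i‖) :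
    ∀ k, 1 ≤ k → F (x k) - Fstar ≤ B k / A k := by
  have hA0 : A 0 = 0 := by simp [hA]
  have hAs : ∀ k, A (k + 1) = A k + a (k + 1) := fun k => by
    rw [hA, hA, Finset.sum_Icc_succ_top (by omega)]
  have hAnn : ∀ k, 0 ≤ A k := fun k => by
    rw [hA]
    exact Finset.sum_nonneg fun i hi => (ha i (Finset.mem_Icc.mp hi).1).le
  have hapos : ∀ k, 0 < a (k + 1) := fun k => ha _ (by omega)
  have hApos : ∀ k, 0 < A (k + 1) := fun k => by linarith [hAs k, hAnn k, hapos k]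
  have hγ0 : ∀ k, 0 ≤ γ k := fun k => by
    rw [hγ]; exact (div_pos (hapos k) (hApos k)).le
  have hγ1 : ∀ k, γ k ≤ 1 := fun k => by
    rw [hγ, div_le_one (hApos k)]; linarith [hAs k, hAnn k]
  have hxs : ∀ k, x k ∈ s := by
    intro k
    induction k with
    | zero => exact hx0
    | succ k ih => rw [hupd]; exact hs.add_smul_sub_mem ih (hv k) ⟨hγ0 k, hγ1 k⟩
  have main : ∀ y ∈ s, ∀ k, A k * F (x k) ≤ A k * F y + B k := by
    intro y hy k
    induction k with
    | zero => simp [hA0, hB]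
    | succ k ih =>
      have h := step_bound hs hψ hD hconv hder1 hder2 hL₂ hLip (hxs k) (hv k) hy (hγ0 k) (hγ1 k)
        (hupd k) (hstat k y hy)
      have hne := (hApos k).ne'
      have m := mul_le_mul_of_nonneg_left h (hApos k).le
      -- Multiplying the weights by `A (k + 1)` turns them into the coefficients in `B`.
      have c1 : A (k + 1) * γ k = a (k + 1) := by rw [hγ]; field_simp
      have c2 : A (k + 1) * γ k ^ 2 = a (k + 1) ^ 2 / A (k + 1) := by rw [hγ]; field_simp
      have c3 : A (k + 1) * γ k ^ 3 = a (k + 1) ^ 3 / A (k + 1) ^ 2 := by rw [hγ]; field_simp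
      have hBs : B (k + 1) = B k + (L₂ * D ^ 3 / 2 * (a (k + 1) ^ 3 / A (k + 1) ^ 2)
          + D * (a (k + 1) * ‖f' (x k) - g k‖)
          + D ^ 2 * (a (k + 1) ^ 2 / A (k + 1) * ‖f'' (x k) - H k‖)) := by
        rw [hB, hB, Finset.sum_range_succ, Finset.sum_range_succ, Finset.sum_range_succ]
        ring
      rw [hBs, ← c2, ← c3]
      simp only [← hF] at m
      linear_combination m + ih + (F y - F (x k) + D * ‖f' (x k) - g k‖) * c1
        + (F (x k) - F y) * hAs k
  intro k hk
  obtain ⟨j, rfl⟩ : ∃ j, k = j + 1 := ⟨k - 1, by omega⟩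
  have hle : F (x (j + 1)) - B (j + 1) / A (j + 1) ≤ Fstar := by
    rw [hFstar]
    refine le_csInf ⟨_, x 0, hx0, rfl⟩ ?_
    rintro _ ⟨y, hy, rfl⟩
    have h : F (x (j + 1)) - F y ≤ B (j + 1) / A (j + 1) := by
      rw [le_div_iff₀ (hApos j)]
      linarith [main y hy (j + 1)]
    linarith
  linarith
end
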